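/- (Lemma 3.5, part 3: symbol estimates for the escape function.) With χ, the backward solution (r(t),θ(t),ρ(t),ω(t)) and the function φ(t,r,θ,ρ,ω) = χ(|r−r(t)|/(5δ₀|t+T₀|)) · χ(|θ−θ(t)|/(δ₀−C|t+T₀|^{-μ})) · χ(|ρ−ρ(t)|/(δ₀−C|t+T₀|^{-1-μ})) · χ(|ω−ω(t)|/(δ₀−C|t+T₀|^{-μ})) as in Lemma 3.5 (δ₀ ∈ (δ'/2,δ'), C large, T₀ < 0 sufficiently negative), for all k, l ∈ ℕ, multi-indices α, β, and n ∈ ℕ there exists a constant C_{kαlβn} such that |∂_r^k ∂_θ^α ∂_ρ^l ∂_ω^β ∂_t^n φ(t,r,θ,ρ,ω)| ≤ C_{kαlβn} (1+|t|)^{-n-k} for all t ≤ 0 and all (r,θ,ρ,ω) ∈ (1,∞)×U×ℝ×ℝ^{n-1}. -/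

import Mathlib

open Real Set Filter Topology

namespace Scattering

/-- The Euclidean norm of a vector in `Fin m → ℝ`. -/
noncomputable def eNorm {m : ℕ} (v : Fin m → ℝ) : ℝ := Real.sqrt (∑ j, v j ^ 2)

/-- Partial derivative in the radial variable of a function of `(r, θ)`. -/
noncomputable def pderivR {m : ℕ} (f : ℝ → (Fin m → ℝ) → ℝ) : ℝ → (Fin m → ℝ) → ℝ :=
  fun r θ => deriv (fun s => f s θ) r

/-- Partial derivative in the `j`-th angular variable of a function of `(r, θ)`. -/
noncomputable def pderivTheta {m : ℕ} (j : Fin m) (f : ℝ → (Fin m → ℝ) → ℝ) :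
    ℝ → (Fin m → ℝ) → ℝ :=
  fun r θ => fderiv ℝ (f r) θ (Pi.single j 1)

/-- Iterated angular derivatives `∂_θ^α` for a multi-index `α` (a list of directions). -/
noncomputable def thetaDerivs {m : ℕ} (α : List (Fin m)) (f : ℝ → (Fin m → ℝ) → ℝ) :
    ℝ → (Fin m → ℝ) → ℝ :=
  α.foldr pderivTheta f

/-- `DecayOn f ν S K` : for all `k, α` there is `C > 0` with
`|∂_r^k ∂_θ^α f(r,θ)| ≤ C r^{-ν-k}` for `r ∈ (S,∞)`, `θ ∈ K`. -/
def DecayOn {m : ℕ} (f : ℝ → (Fin m → ℝ) → ℝ) (ν S : ℝ) (K : Set (Fin m → ℝ)) : Prop :=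
  ∀ (k : ℕ) (α : List (Fin m)), ∃ C > 0, ∀ r ∈ Ioi S, ∀ θ ∈ K,
    |(pderivR (m := m))^[k] (thetaDerivs α f) r θ| ≤ C * r ^ (-ν - (k : ℝ))

/-- The classical kinetic energy function
`p(r,θ,ρ,ω) = ρ² + r⁻²Σ h^{jk} ω_j ω_k + a₀ ρ² + r⁻¹ Σ a₁^j ρ ω_j + r⁻² Σ a₂^{jk} ω_j ω_k`. -/
noncomputable def energy {m : ℕ} (hM : (Fin m → ℝ) → Matrix (Fin m) (Fin m) ℝ)
    (a0 : ℝ → (Fin m → ℝ) → ℝ) (a1 : ℝ → (Fin m → ℝ) → Fin m → ℝ)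
    (a2 : ℝ → (Fin m → ℝ) → Matrix (Fin m) (Fin m) ℝ) :
    ℝ → (Fin m → ℝ) → ℝ → (Fin m → ℝ) → ℝ :=
  fun r θ ρ ω =>
    ρ ^ 2 + (∑ j, ∑ k, hM θ j k * ω j * ω k) / r ^ 2 + a0 r θ * ρ ^ 2
      + (∑ j, a1 r θ j * ρ * ω j) / r + (∑ j, ∑ k, a2 r θ j k * ω j * ω k) / r ^ 2

section PhaseDerivs

variable {m : ℕ} (p : ℝ → (Fin m → ℝ) → ℝ → (Fin m → ℝ) → ℝ)

/-- `∂p/∂r`. -/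
noncomputable def pdR (r : ℝ) (θ : Fin m → ℝ) (ρ : ℝ) (ω : Fin m → ℝ) : ℝ :=
  deriv (fun s => p s θ ρ ω) r

/-- `∂p/∂θ_j`. -/
noncomputable def pdTheta (j : Fin m) (r : ℝ) (θ : Fin m → ℝ) (ρ : ℝ) (ω : Fin m → ℝ) : ℝ :=
  fderiv ℝ (fun θ' => p r θ' ρ ω) θ (Pi.single j 1)

/-- `∂p/∂ρ`. -/
noncomputable def pdRho (r : ℝ) (θ : Fin m → ℝ) (ρ : ℝ) (ω : Fin m → ℝ) : ℝ :=
  deriv (fun s => p r θ s ω) ρ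

/-- `∂p/∂ω_j`. -/
noncomputable def pdOmega (j : Fin m) (r : ℝ) (θ : Fin m → ℝ) (ρ : ℝ) (ω : Fin m → ℝ) : ℝ :=
  fderiv ℝ (fun ω' => p r θ ρ ω') ω (Pi.single j 1)

/-- `(r,θ,ρ,ω)` solves the Hamiltonian system
`ṙ = ∂p/∂ρ, θ̇ = ∂p/∂ω, ρ̇ = -∂p/∂r, ω̇ = -∂p/∂θ` on the set `I` of times. -/
def IsHamSolOn (r : ℝ → ℝ) (θ : ℝ → Fin m → ℝ) (ρ : ℝ → ℝ) (ω : ℝ → Fin m → ℝ)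
    (I : Set ℝ) : Prop :=
  ∀ t ∈ I,
    HasDerivAt r (pdRho p (r t) (θ t) (ρ t) (ω t)) t ∧
    (∀ j, HasDerivAt (fun s => θ s j) (pdOmega p j (r t) (θ t) (ρ t) (ω t)) t) ∧
    HasDerivAt ρ (-pdR p (r t) (θ t) (ρ t) (ω t)) t ∧
    (∀ j, HasDerivAt (fun s => ω s j) (-pdTheta p j (r t) (θ t) (ρ t) (ω t)) t)

/-- The interaction-picture (time-dependent) Hamiltonian `K(t,R,θ,ρ,ω) = ρ² - p(R+2tρ,θ,ρ,ω)`. -/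
noncomputable def Kint (t R : ℝ) (θ : Fin m → ℝ) (ρ : ℝ) (ω : Fin m → ℝ) : ℝ :=
  ρ ^ 2 - p (R + 2 * t * ρ) θ ρ ω

/-- `∂K/∂R`. -/
noncomputable def KdR (t R : ℝ) (θ : Fin m → ℝ) (ρ : ℝ) (ω : Fin m → ℝ) : ℝ :=
  deriv (fun x => Kint p t x θ ρ ω) R

/-- `∂K/∂θ_j`. -/
noncomputable def KdTheta (j : Fin m) (t R : ℝ) (θ : Fin m → ℝ) (ρ : ℝ) (ω : Fin m → ℝ) : ℝ :=
  fderiv ℝ (fun θ' => Kint p t R θ' ρ ω) θ (Pi.single j 1)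

/-- `∂K/∂ρ`. -/
noncomputable def KdRho (t R : ℝ) (θ : Fin m → ℝ) (ρ : ℝ) (ω : Fin m → ℝ) : ℝ :=
  deriv (fun x => Kint p t R θ x ω) ρ

/-- `∂K/∂ω_j`. -/
noncomputable def KdOmega (j : Fin m) (t R : ℝ) (θ : Fin m → ℝ) (ρ : ℝ) (ω : Fin m → ℝ) : ℝ :=
  fderiv ℝ (fun ω' => Kint p t R θ ρ ω') ω (Pi.single j 1)

end PhaseDerivs

/-- The phase space `ℝ × ℝ^m × ℝ × ℝ^m` with coordinates `(R, θ, ρ, ω)`. -/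
abbrev Phase (m : ℕ) : Type := ℝ × (Fin m → ℝ) × ℝ × (Fin m → ℝ)

/-- A curve `f = (R,θ,ρ,ω)` solves the interaction-picture Hamiltonian system
`Ṙ = ∂K/∂ρ, θ̇ = ∂K/∂ω, ρ̇ = -∂K/∂R, ω̇ = -∂K/∂θ` on the set `I` of times. -/
def IsIntSolOn {m : ℕ} (p : ℝ → (Fin m → ℝ) → ℝ → (Fin m → ℝ) → ℝ)
    (f : ℝ → Phase m) (I : Set ℝ) : Prop :=
  ∀ t ∈ I,
    HasDerivAt (fun s => (f s).1) (KdRho p t (f t).1 (f t).2.1 (f t).2.2.1 (f t).2.2.2) t ∧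
    (∀ j, HasDerivAt (fun s => (f s).2.1 j)
      (KdOmega p j t (f t).1 (f t).2.1 (f t).2.2.1 (f t).2.2.2) t) ∧
    HasDerivAt (fun s => (f s).2.2.1)
      (-(KdR p t (f t).1 (f t).2.1 (f t).2.2.1 (f t).2.2.2)) t ∧
    (∀ j, HasDerivAt (fun s => (f s).2.2.2 j)
      (-(KdTheta p j t (f t).1 (f t).2.1 (f t).2.2.1 (f t).2.2.2)) t)

/-- The data of a scattering metric of short-range type on the end `(1,∞) × U`:
the boundary metric `h` (smooth, symmetric, positive definite) and the coefficients
`a₀, a₁, a₂` of the kinetic energy, smooth on `(1,∞) × U` with the short-range decay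
`|∂_r^k ∂_θ^α a₀| ≤ C r^{-1-μ-k}`, `|∂_r^k ∂_θ^α a₁| ≤ C r^{-μ-k}`,
`|∂_r^k ∂_θ^α a₂| ≤ C r^{-μ-k}` on `(1,∞) × K` for every compact `K ⊆ U`. -/
structure Coeffs (m : ℕ) (μ : ℝ) (U : Set (Fin m → ℝ)) where
  hM : (Fin m → ℝ) → Matrix (Fin m) (Fin m) ℝ
  a0 : ℝ → (Fin m → ℝ) → ℝ
  a1 : ℝ → (Fin m → ℝ) → Fin m → ℝ
  a2 : ℝ → (Fin m → ℝ) → Matrix (Fin m) (Fin m) ℝ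
  hM_smooth : ∀ j k, ContDiffOn ℝ (⊤ : ℕ∞) (fun θ => hM θ j k) U
  hM_symm : ∀ θ ∈ U, (hM θ).IsSymm
  hM_posdef : ∀ θ ∈ U, (hM θ).PosDef
  a0_smooth : ContDiffOn ℝ (⊤ : ℕ∞) (fun z : ℝ × (Fin m → ℝ) => a0 z.1 z.2) (Ioi (1:ℝ) ×ˢ U)
  a1_smooth : ∀ j, ContDiffOn ℝ (⊤ : ℕ∞) (fun z : ℝ × (Fin m → ℝ) => a1 z.1 z.2 j) (Ioi (1:ℝ) ×ˢ U)
  a2_smooth : ∀ j k, ContDiffOn ℝ (⊤ : ℕ∞) (fun z : ℝ × (Fin m → ℝ) => a2 z.1 z.2 j k) (Ioi (1:ℝ) ×ˢ U)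
  a2_symm : ∀ r θ j k, a2 r θ j k = a2 r θ k j
  a0_decay : ∀ K : Set (Fin m → ℝ), IsCompact K → K ⊆ U → DecayOn a0 (1 + μ) 1 K
  a1_decay : ∀ K : Set (Fin m → ℝ), IsCompact K → K ⊆ U →
    ∀ j, DecayOn (fun r θ => a1 r θ j) μ 1 K
  a2_decay : ∀ K : Set (Fin m → ℝ), IsCompact K → K ⊆ U →
    ∀ j k, DecayOn (fun r θ => a2 r θ j k) μ 1 K

/-- The kinetic energy function associated to the data `c`. -/
noncomputable def Coeffs.p {m : ℕ} {μ : ℝ} {U : Set (Fin m → ℝ)} (c : Coeffs m μ U) :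
    ℝ → (Fin m → ℝ) → ℝ → (Fin m → ℝ) → ℝ :=
  energy c.hM c.a0 c.a1 c.a2


/-- Functions of the five phase-space-time variables `(t, r, θ, ρ, ω)`. -/
abbrev F5 (m : ℕ) : Type := ℝ → ℝ → (Fin m → ℝ) → ℝ → (Fin m → ℝ) → ℝ

/-- `∂_t`. -/
noncomputable def DT {m : ℕ} (φ : F5 m) : F5 m :=
  fun t r θ ρ ω => deriv (fun s => φ s r θ ρ ω) t

/-- `∂_r`. -/
noncomputable def DR {m : ℕ} (φ : F5 m) : F5 m :=
  fun t r θ ρ ω => deriv (fun x => φ t x θ ρ ω) r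

/-- `∂_{θ_j}`. -/
noncomputable def DTheta {m : ℕ} (j : Fin m) (φ : F5 m) : F5 m :=
  fun t r θ ρ ω => fderiv ℝ (fun y => φ t r y ρ ω) θ (Pi.single j 1)

/-- `∂_ρ`. -/
noncomputable def DRho {m : ℕ} (φ : F5 m) : F5 m :=
  fun t r θ ρ ω => deriv (fun x => φ t r θ x ω) ρ

/-- `∂_{ω_j}`. -/
noncomputable def DOmega {m : ℕ} (j : Fin m) (φ : F5 m) : F5 m :=
  fun t r θ ρ ω => fderiv ℝ (fun y => φ t r θ ρ y) ω (Pi.single j 1)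

/-- The mixed derivative `∂_r^k ∂_θ^α ∂_ρ^l ∂_ω^β ∂_t^n φ`. -/
noncomputable def mixedDeriv {m : ℕ} (k : ℕ) (α : List (Fin m)) (l : ℕ)
    (β : List (Fin m)) (n' : ℕ) (φ : F5 m) : F5 m :=
  (DR (m := m))^[k] (α.foldr DTheta ((DRho (m := m))^[l] (β.foldr DOmega ((DT (m := m))^[n'] φ))))

/-- The escape function of Lemma 3.5. -/
noncomputable def escapeFn {m : ℕ} (μ : ℝ) (χ : ℝ → ℝ) (δ₀ C T₀ : ℝ)
    (rS : ℝ → ℝ) (θS : ℝ → Fin m → ℝ) (ρS : ℝ → ℝ) (ωS : ℝ → Fin m → ℝ) : F5 m :=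
  fun t r θ ρ ω =>
    χ (|r - rS t| / (5 * δ₀ * |t + T₀|)) *
      χ (eNorm (θ - θS t) / (δ₀ - C * |t + T₀| ^ (-μ))) *
      χ (|ρ - ρS t| / (δ₀ - C * |t + T₀| ^ (-(1:ℝ) - μ))) *
      χ (eNorm (ω - ωS t) / (δ₀ - C * |t + T₀| ^ (-μ)))

/-!
Along the trajectory `r(t)` is comparable to `|t + T₀|`, because `ṙ` is bounded and `r` grows at
least linearly. The energy minus `ρ²` is a classical symbol of order `-1` in `r`, so
differentiating a symbol of `(r, θ, ρ, ω)` along the Hamiltonian flow lowers its order by one.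
Hence the coordinates of the trajectory are symbols in `t`, of order `1` for `r(t)` and `0` for the
others, and each factor of the escape function has the form `Ψ ((L x - x(t)) / D(t))` with `Ψ`
compactly supported, `L` a coordinate projection and `D` elliptic of the same order as the centre
`x(t)`. The `t`-derivative of such a rescaled bump produces only `D⁻¹ x'` and `D⁻¹ D'` times
functions of the same kind, since the rescaled variable is bounded on the support of `Ψ`; this
gains `|t + T₀|⁻¹`, and so does each `r`-derivative in the radial factor.

The time `t = 0` is a boundary point at which the iterated derivatives of the statement look at
`t > 0`, where nothing is known about the trajectory; there a derivative which does not exist is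
`0` by convention, and one which exists agrees with the one-sided derivative from the left.
-/

section SymbolClasses

open Asymptotics

universe u

/-- The data fixing a weighted symbol class on the set `domain`: a derivative in the direction
`dir i` improves the decay, measured by powers of `scale`, by `scale ^ (-weight i)`. -/
structure SymbolFrame (E ι : Type*) where
  dir : ι → E
  weight : ι → ℝ
  scale : E → ℝ
  domain : Set E
  one_le_scale : ∀ z ∈ domain, 1 ≤ scale z

namespace SymbolFrame

section Scale

variable {E ι : Type*} {𝔉 : SymbolFrame E ι} {a b ν ν' : ℝ}

theorem scale_pos {z : E} (hz : z ∈ 𝔉.domain) : 0 < 𝔉.scale z :=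
  one_pos.trans_le (𝔉.one_le_scale z hz)

theorem scale_rpow_ne_zero {z : E} (hz : z ∈ 𝔉.domain) : 𝔉.scale z ^ a ≠ 0 :=
  (rpow_pos_of_pos (scale_pos hz) a).ne'

theorem ne_zero_of_elliptic {D : E → ℝ} (hell : (fun z => 𝔉.scale z ^ a) =O[𝓟 𝔉.domain] D)
    {z : E} (hz : z ∈ 𝔉.domain) : D z ≠ 0 := fun h0 =>
  scale_rpow_ne_zero hz (eventually_principal.1 hell.eq_zero_imp z hz h0)

theorem scale_rpow_isBigO (h : ν ≤ ν') :
    (fun z => 𝔉.scale z ^ ν) =O[𝓟 𝔉.domain] fun z => 𝔉.scale z ^ ν' := by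
  refine IsBigO.of_norm_eventuallyLE (eventually_principal.2 fun z hz => ?_)
  exact (Real.norm_of_nonneg (rpow_nonneg (scale_pos hz).le _)).trans_le
    (rpow_le_rpow_of_exponent_le (𝔉.one_le_scale z hz) h)

theorem scale_rpow_mul_isBigO :
    (fun z => 𝔉.scale z ^ a * 𝔉.scale z ^ b) =O[𝓟 𝔉.domain] fun z => 𝔉.scale z ^ (a + b) :=
  EventuallyEq.isBigO <| eventually_principal.2 fun _ hz => (rpow_add (scale_pos hz) a b).symm

theorem isBigO_bilin {F G H : Type*} [NormedAddCommGroup F] [NormedSpace ℝ F]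
    [NormedAddCommGroup G] [NormedSpace ℝ G] [NormedAddCommGroup H] [NormedSpace ℝ H]
    (B : F →L[ℝ] G →L[ℝ] H) {f : E → F} {g : E → G}
    (hf : f =O[𝓟 𝔉.domain] fun z => 𝔉.scale z ^ a)
    (hg : g =O[𝓟 𝔉.domain] fun z => 𝔉.scale z ^ b) :
    (fun z => B (f z) (g z)) =O[𝓟 𝔉.domain] fun z => 𝔉.scale z ^ (a + b) := by
  have hB : (fun z => B (f z) (g z)) =O[𝓟 𝔉.domain] fun z => ‖f z‖ * ‖g z‖ :=
    IsBigO.of_bound ‖B‖ <| .of_forall fun z => by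
      simpa [mul_assoc] using B.le_opNorm₂ (f z) (g z)
  exact hB.trans ((hf.norm_left.mul hg.norm_left).trans scale_rpow_mul_isBigO)

theorem isBigO_comp_of_hasCompactSupport {Y F : Type*} [TopologicalSpace Y]
    [NormedAddCommGroup F] {Ψ : Y → F} (hΨ : Continuous Ψ) (hsupp : HasCompactSupport Ψ)
    (V : E → Y) : (fun z => Ψ (V z)) =O[𝓟 𝔉.domain] fun z => 𝔉.scale z ^ (0 : ℝ) := by
  obtain ⟨M, hM⟩ := hsupp.exists_bound_of_continuous hΨ
  simp only [rpow_zero]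
  exact IsBigO.of_bound M (.of_forall fun z => by simpa using hM (V z))

end Scale

variable {E : Type*} [NormedAddCommGroup E] [NormedSpace ℝ E] {ι : Type*}
  {F : Type*} [NormedAddCommGroup F] [NormedSpace ℝ F]
  {G : Type*} [NormedAddCommGroup G] [NormedSpace ℝ G]
  {H : Type*} [NormedAddCommGroup H] [NormedSpace ℝ H]

/-- `𝔉.IsSymbol N ν f`: `f` is a symbol of order `ν`, with control of its derivatives up to
order `N` in the directions of the frame. The derivative `f'` is a datum because it is only
determined on `𝔉.domain`, which need not be open, whereas differentiating it again involves its
values nearby; any extension will do. -/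
def IsSymbol (𝔉 : SymbolFrame E ι) : ℕ → ℝ → (E → F) → Prop
  | 0, ν, f => f =O[𝓟 𝔉.domain] fun z => 𝔉.scale z ^ ν
  | N + 1, ν, f => (f =O[𝓟 𝔉.domain] fun z => 𝔉.scale z ^ ν) ∧
      ∃ f' : E → E →L[ℝ] F, (∀ z ∈ 𝔉.domain, HasFDerivAt f (f' z) z) ∧
        ∀ i, IsSymbol 𝔉 N (ν - 𝔉.weight i) (fun z => f' z (𝔉.dir i))

variable {𝔉 : SymbolFrame E ι} {N : ℕ} {a b ν ν' : ℝ} {f g : E → F}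

namespace IsSymbol

theorem isBigO (h : 𝔉.IsSymbol N ν f) : f =O[𝓟 𝔉.domain] fun z => 𝔉.scale z ^ ν := by
  cases N with
  | zero => exact h
  | succ N => exact h.1

theorem of_succ (h : 𝔉.IsSymbol (N + 1) ν f) : 𝔉.IsSymbol N ν f := by
  induction N generalizing ν f with
  | zero => exact h.1
  | succ N ih =>
    obtain ⟨hf, f', hf', hN⟩ := h
    exact ⟨hf, f', hf', fun i => ih (hN i)⟩

theorem mono (h : 𝔉.IsSymbol N ν f) (hν : ν ≤ ν') : 𝔉.IsSymbol N ν' f := by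
  induction N generalizing ν ν' f with
  | zero => exact IsBigO.trans h (scale_rpow_isBigO hν)
  | succ N ih =>
    obtain ⟨hf, f', hf', hN⟩ := h
    exact ⟨hf.trans (scale_rpow_isBigO hν), f', hf', fun i => ih (hN i) (by linarith)⟩

theorem congr (h : 𝔉.IsSymbol N ν f) (hfg : ∀ z ∈ 𝔉.domain, g =ᶠ[𝓝 z] f) :
    𝔉.IsSymbol N ν g := by
  have hg : g =O[𝓟 𝔉.domain] fun z => 𝔉.scale z ^ ν :=
    h.isBigO.congr' (eventually_principal.2 fun z hz => (hfg z hz).eq_of_nhds.symm) .rfl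
  cases N with
  | zero => exact hg
  | succ N =>
    obtain ⟨-, f', hf', hN⟩ := h
    exact ⟨hg, f', fun z hz => (hf' z hz).congr_of_eventuallyEq (hfg z hz), hN⟩

theorem zero : 𝔉.IsSymbol N ν (fun _ => (0 : F)) := by
  induction N generalizing ν with
  | zero => exact isBigO_zero _ _
  | succ N ih =>
    exact ⟨isBigO_zero _ _, fun _ => 0, fun z _ => hasFDerivAt_const _ _, fun _ => ih⟩

theorem const (y : F) : 𝔉.IsSymbol N 0 (fun _ => y) := by
  have hy : (fun _ : E => y) =O[𝓟 𝔉.domain] fun z => 𝔉.scale z ^ (0 : ℝ) := by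
    simpa only [rpow_zero] using isBigO_const_const y one_ne_zero _
  cases N with
  | zero => exact hy
  | succ N => exact ⟨hy, fun _ => 0, fun z _ => hasFDerivAt_const _ _, fun _ => zero⟩

theorem of_clm (L : E →L[ℝ] F) (hL : L =O[𝓟 𝔉.domain] fun z => 𝔉.scale z ^ ν)
    (hdir : ∀ i, L (𝔉.dir i) = 0 ∨ 𝔉.weight i ≤ ν) : 𝔉.IsSymbol N ν L := by
  cases N with
  | zero => exact hL
  | succ N =>
    refine ⟨hL, fun _ => L, fun z _ => L.hasFDerivAt, fun i => ?_⟩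
    rcases hdir i with h | h
    · simpa only [h] using zero
    · exact (const _).mono (by linarith)

theorem add (hf : 𝔉.IsSymbol N ν f) (hg : 𝔉.IsSymbol N ν g) :
    𝔉.IsSymbol N ν (fun z => f z + g z) := by
  induction N generalizing ν f g with
  | zero => exact IsBigO.add hf hg
  | succ N ih =>
    obtain ⟨hf, f', hf', hfN⟩ := hf
    obtain ⟨hg, g', hg', hgN⟩ := hg
    exact ⟨hf.add hg, _, fun z hz => (hf' z hz).add (hg' z hz), fun i => ih (hfN i) (hgN i)⟩

theorem sum {κ : Type*} (s : Finset κ) {f : κ → E → F} (hf : ∀ k ∈ s, 𝔉.IsSymbol N ν (f k)) :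
    𝔉.IsSymbol N ν (fun z => ∑ k ∈ s, f k z) := by
  classical
  induction s using Finset.induction_on with
  | empty => simpa only [Finset.sum_empty] using zero
  | insert k s hk ih =>
    simp only [Finset.sum_insert hk]
    exact (hf k (Finset.mem_insert_self k s)).add
      (ih fun j hj => hf j (Finset.mem_insert_of_mem hj))

theorem bilin (B : F →L[ℝ] G →L[ℝ] H) {g : E → G} (hf : 𝔉.IsSymbol N a f)
    (hg : 𝔉.IsSymbol N b g) : 𝔉.IsSymbol N (a + b) (fun z => B (f z) (g z)) := by
  induction N generalizing a b f g with
  | zero => exact isBigO_bilin B hf hg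
  | succ N ih =>
    have hf₀ := hf.of_succ
    have hg₀ := hg.of_succ
    obtain ⟨hf, f', hf', hfN⟩ := hf
    obtain ⟨hg, g', hg', hgN⟩ := hg
    refine ⟨isBigO_bilin B hf hg, _,
      fun z hz => B.hasFDerivAt_of_bilinear (hf' z hz) (hg' z hz), fun i => ?_⟩
    exact add ((ih hf₀ (hgN i)).mono (by linarith)) ((ih (hfN i) hg₀).mono (by linarith))

theorem mul {f g : E → ℝ} (hf : 𝔉.IsSymbol N a f) (hg : 𝔉.IsSymbol N b g) :
    𝔉.IsSymbol N (a + b) (fun z => f z * g z) :=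
  hf.bilin (ContinuousLinearMap.mul ℝ ℝ) hg

theorem smul {f : E → ℝ} {g : E → F} (hf : 𝔉.IsSymbol N a f) (hg : 𝔉.IsSymbol N b g) :
    𝔉.IsSymbol N (a + b) (fun z => f z • g z) :=
  hf.bilin (ContinuousLinearMap.lsmul ℝ ℝ) hg

theorem clm_apply {T : E → F →L[ℝ] G} {g : E → F} (hT : 𝔉.IsSymbol N a T)
    (hg : 𝔉.IsSymbol N b g) : 𝔉.IsSymbol N (a + b) (fun z => T z (g z)) :=
  hT.bilin (ContinuousLinearMap.id ℝ (F →L[ℝ] G)) hg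

theorem const_smul (y : ℝ) (hf : 𝔉.IsSymbol N a f) : 𝔉.IsSymbol N a (fun z => y • f z) := by
  simpa only [zero_add] using (const y).smul hf

theorem neg (hf : 𝔉.IsSymbol N a f) : 𝔉.IsSymbol N a (fun z => -f z) := by
  simpa only [neg_one_smul] using hf.const_smul (-1)

theorem sub (hf : 𝔉.IsSymbol N a f) (hg : 𝔉.IsSymbol N a g) :
    𝔉.IsSymbol N a (fun z => f z - g z) := by
  simpa only [sub_eq_add_neg] using hf.add hg.neg

theorem inv {D : E → ℝ} (hD : 𝔉.IsSymbol N a D)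
    (hell : (fun z => 𝔉.scale z ^ a) =O[𝓟 𝔉.domain] D) :
    𝔉.IsSymbol N (-a) (fun z => (D z)⁻¹) := by
  have hD0 : ∀ z ∈ 𝔉.domain, D z ≠ 0 := fun z hz => ne_zero_of_elliptic hell hz
  have hinv : (fun z => (D z)⁻¹) =O[𝓟 𝔉.domain] fun z => 𝔉.scale z ^ (-a) := by
    refine (hell.inv_rev (eventually_principal.2 fun z hz h0 =>
        absurd h0 (scale_rpow_ne_zero hz))).congr'
      .rfl (eventually_principal.2 fun z hz => (rpow_neg (scale_pos hz).le a).symm)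
  induction N with
  | zero => exact hinv
  | succ N ih =>
    have hI := ih hD.of_succ
    obtain ⟨-, D', hD', hDN⟩ := hD
    refine ⟨hinv, _, fun z hz => (hasDerivAt_inv (hD0 z hz)).comp_hasFDerivAt z (hD' z hz),
      fun i => ?_⟩
    refine (((hI.mul hI).mul (hDN i)).neg.mono (by linarith)).congr
      fun z _ => .of_forall fun y => ?_
    simp only [smul_apply, smul_eq_mul]
    ring

section Composition

variable {F' : Type u} [NormedAddCommGroup F'] [NormedSpace ℝ F']
  {Y : Type u} [NormedAddCommGroup Y] [NormedSpace ℝ Y]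

-- `V` is bounded on the support of `Ψ ∘ V`, so the term `B i • V` of its derivative behaves like
-- a symbol there although `V` itself is unbounded.
theorem comp_of_hasCompactSupport {V : E → Y} {V' : E → E →L[ℝ] Y}
    (hV : ∀ z ∈ 𝔉.domain, HasFDerivAt V (V' z) z) {A : ι → E → Y} {B : ι → E → ℝ}
    (hV' : ∀ i z, V' z (𝔉.dir i) = A i z + B i z • V z)
    (hA : ∀ i, 𝔉.IsSymbol N (-𝔉.weight i) (A i)) (hB : ∀ i, 𝔉.IsSymbol N (-𝔉.weight i) (B i))
    {Ψ : Y → F'} (hΨ : ContDiff ℝ (⊤ : ℕ∞) Ψ) (hsupp : HasCompactSupport Ψ) :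
    𝔉.IsSymbol N 0 (fun z => Ψ (V z)) := by
  induction N generalizing F' with
  | zero => exact isBigO_comp_of_hasCompactSupport hΨ.continuous hsupp V
  | succ N ih =>
    have hdΨ : ContDiff ℝ (⊤ : ℕ∞) (fderiv ℝ Ψ) := hΨ.fderiv_right (by simp)
    have hdsupp : HasCompactSupport (fderiv ℝ Ψ) := hsupp.fderiv ℝ
    refine ⟨isBigO_comp_of_hasCompactSupport hΨ.continuous hsupp V,
      fun z => fderiv ℝ Ψ (V z) ∘L V' z, fun z hz =>
      (hΨ.differentiable (by simp) (V z)).hasFDerivAt.comp z (hV z hz), fun i => ?_⟩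
    have hrad : 𝔉.IsSymbol N 0 (fun z => fderiv ℝ Ψ (V z) (V z)) :=
      ih (fun i => (hA i).of_succ) (fun i => (hB i).of_succ) (hdΨ.clm_apply contDiff_id)
        (hdsupp.mono fun y hy h0 => hy (by simp [h0]))
    have hder : 𝔉.IsSymbol N 0 (fun z => fderiv ℝ Ψ (V z)) :=
      ih (fun i => (hA i).of_succ) (fun i => (hB i).of_succ) hdΨ hdsupp
    simpa [hV', map_add] using
      (hder.clm_apply (hA i).of_succ).add (((hB i).of_succ.smul hrad).mono (by simp))

end Composition

end IsSymbol

section Product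

variable {P κ : Type*} [NormedAddCommGroup P] [NormedSpace ℝ P]

/-- The frame on `E × P` adding to the directions of `𝔉` the directions `b k` of the second
factor, of weight `w k`; scale and domain are pulled back from `E`. -/
def prod (𝔉 : SymbolFrame E ι) (b : κ → P) (w : κ → ℝ) : SymbolFrame (E × P) (ι ⊕ κ) where
  dir := Sum.elim (fun i => (𝔉.dir i, 0)) (fun k => (0, b k))
  weight := Sum.elim 𝔉.weight w
  scale z := 𝔉.scale z.1
  domain := {z | z.1 ∈ 𝔉.domain}
  one_le_scale z hz := 𝔉.one_le_scale z.1 hz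

variable {b : κ → P} {w : κ → ℝ}

theorem IsSymbol.comp_fst (hf : 𝔉.IsSymbol N ν f) :
    (𝔉.prod b w).IsSymbol N ν (fun z : E × P => f z.1) := by
  have hO : (fun z : E × P => f z.1) =O[𝓟 (𝔉.prod b w).domain] fun z => 𝔉.scale z.1 ^ ν :=
    hf.isBigO.comp_tendsto (tendsto_principal_principal.2 fun _ hz => hz)
  induction N generalizing ν f with
  | zero => exact hO
  | succ N ih =>
    obtain ⟨-, f', hf', hN⟩ := hf
    refine ⟨hO, fun z => f' z.1 ∘L ContinuousLinearMap.fst ℝ E P,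
      fun z hz => (hf' z.1 hz).comp z hasFDerivAt_fst, ?_⟩
    rintro (i | k)
    · exact ih (hN i) ((hN i).isBigO.comp_tendsto (tendsto_principal_principal.2 fun _ hz => hz))
    · simpa [prod] using zero

theorem IsSymbol.rescaledBump {Y F' : Type u} [NormedAddCommGroup Y] [NormedSpace ℝ Y]
    [NormedAddCommGroup F'] [NormedSpace ℝ F'] {x : E → Y} {D : E → ℝ}
    (hx : 𝔉.IsSymbol (N + 1) a x) (hD : 𝔉.IsSymbol (N + 1) a D)
    (hell : (fun z => 𝔉.scale z ^ a) =O[𝓟 𝔉.domain] D)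
    {L : P →L[ℝ] Y} (hL : ∀ k, L (b k) = 0 ∨ w k ≤ a)
    {Ψ : Y → F'} (hΨ : ContDiff ℝ (⊤ : ℕ∞) Ψ) (hsupp : HasCompactSupport Ψ) :
    (𝔉.prod b w).IsSymbol N 0 (fun z : E × P => Ψ ((D z.1)⁻¹ • (L z.2 - x z.1))) := by
  have hDinv := hD.of_succ.inv hell
  have hD0 : ∀ z ∈ 𝔉.domain, D z ≠ 0 := fun z hz => ne_zero_of_elliptic hell hz
  obtain ⟨-, x', hx', hxN⟩ := hx
  obtain ⟨-, D', hD', hDN⟩ := hD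
  refine comp_of_hasCompactSupport
    (V' := fun z => (D z.1)⁻¹ • (L ∘L ContinuousLinearMap.snd ℝ E P
        - x' z.1 ∘L ContinuousLinearMap.fst ℝ E P)
      + ((-(D z.1 ^ 2)⁻¹) • (D' z.1 ∘L ContinuousLinearMap.fst ℝ E P)).smulRight
        (L z.2 - x z.1))
    (A := Sum.elim (fun i z => (D z.1)⁻¹ • -x' z.1 (𝔉.dir i)) (fun k z => (D z.1)⁻¹ • L (b k)))
    (B := Sum.elim (fun i z => -((D z.1)⁻¹ * D' z.1 (𝔉.dir i))) (fun _ _ => 0))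
    (fun z hz => ?_) ?_ ?_ ?_ hΨ hsupp
  · have hinv := (hasDerivAt_inv (hD0 z.1 hz)).comp_hasFDerivAt z
      ((hD' z.1 hz).comp z hasFDerivAt_fst)
    exact hinv.smul ((L.hasFDerivAt.comp z hasFDerivAt_snd).sub
      ((hx' z.1 hz).comp z hasFDerivAt_fst))
  · rintro (i | k) z
    · simp only [prod, Sum.elim_inl, add_apply, smul_apply, sub_apply,
        ContinuousLinearMap.comp_apply, ContinuousLinearMap.coe_fst', ContinuousLinearMap.coe_snd',
        ContinuousLinearMap.smulRight_apply, map_zero, smul_eq_mul]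
      module
    · simp [prod]
  · rintro (i | k)
    · exact (hDinv.smul (hxN i).neg).comp_fst.mono (by simp [prod])
    · rcases hL k with h0 | hk
      · simpa [h0] using zero
      · exact (hDinv.smul (const (L (b k)))).comp_fst.mono (by simpa [prod] using hk)
  · rintro (i | k)
    · exact (hDinv.mul (hDN i)).neg.comp_fst.mono (by simp [prod])
    · exact zero

end Product

section IntegralCurve

/-- The symbol classes of functions of time `t ∈ I`: each derivative gains a factor `τ⁻¹`. -/
def time (I : Set ℝ) (τ : ℝ → ℝ) (hτ : ∀ t ∈ I, 1 ≤ τ t) : SymbolFrame ℝ Unit where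
  dir _ := 1
  weight _ := 1
  scale := τ
  domain := I
  one_le_scale := hτ

variable {I : Set ℝ} {τ : ℝ → ℝ} {hτ : ∀ t ∈ I, 1 ≤ τ t}

theorem IsSymbol.time_succ {u u' : ℝ → F} (hu : u =O[𝓟 I] fun t => τ t ^ ν)
    (hderiv : ∀ t ∈ I, HasDerivAt u (u' t) t) (hu' : (time I τ hτ).IsSymbol N (ν - 1) u') :
    (time I τ hτ).IsSymbol (N + 1) ν u :=
  ⟨hu, fun t => ContinuousLinearMap.toSpanSingleton ℝ (u' t),
    fun t ht => (hderiv t ht).hasFDerivAt, fun _ => by simpa [time] using hu'⟩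

theorem IsSymbol.comp_integralCurve [Fintype ι] {γ : ℝ → E} {X : ι → E → ℝ}
    (hγ : ∀ t ∈ I, HasDerivAt γ (∑ i, X i (γ t) • 𝔉.dir i) t) (hmem : MapsTo γ I 𝔉.domain)
    (hX : ∀ i, 𝔉.IsSymbol N (𝔉.weight i - 1) (X i))
    (hscale : (fun t => 𝔉.scale (γ t)) =Θ[𝓟 I] τ) (hf : 𝔉.IsSymbol N ν f) :
    (time I τ hτ).IsSymbol N ν (fun t => f (γ t)) := by
  have hO {μ : ℝ} {g : E → F} (hg : g =O[𝓟 𝔉.domain] fun z => 𝔉.scale z ^ μ) :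
      (fun t => g (γ t)) =O[𝓟 I] fun t => τ t ^ μ :=
    (hg.comp_tendsto (tendsto_principal_principal.2 hmem)).trans
      (IsTheta.rpow (eventually_principal.2 fun t ht => (scale_pos (hmem ht)).le)
        (eventually_principal.2 fun t ht => zero_le_one.trans (hτ t ht)) hscale).isBigO
  induction N generalizing ν f with
  | zero => exact hO hf
  | succ N ih =>
    obtain ⟨hf, f', hf', hN⟩ := hf
    have hLie : 𝔉.IsSymbol N (ν - 1) (fun z => ∑ i, X i z • f' z (𝔉.dir i)) :=
      sum _ fun i _ => ((hX i).of_succ.smul (hN i)).mono (by linarith)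
    refine time_succ (hO hf) (fun t ht => ?_) (ih (fun i => (hX i).of_succ) hLie)
    simpa [map_sum, Function.comp_def] using (hf' (γ t) (hmem ht)).comp_hasDerivAt t (hγ t ht)

theorem IsSymbol.scale_rpow {e : ℝ} (hderiv : ∀ t ∈ I, HasDerivAt τ e t) (s : ℝ) :
    (time I τ hτ).IsSymbol N s (fun t => τ t ^ s) := by
  induction N generalizing s with
  | zero => exact isBigO_refl _ _
  | succ N ih =>
    refine time_succ (isBigO_refl _ _) (fun t ht => (hderiv t ht).rpow_const (.inl ?_))
      ((ih (s - 1)).const_smul (e * s))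
    exact (one_pos.trans_le (hτ t ht)).ne'

end IntegralCurve

section OneSided

/-- Symbols up to points where a derivative fails to exist and takes the value `0`: at each point
of the domain `g` is either `0` or given by a symbol. On the boundary of the domain nothing better
can be said about the iterated derivatives of a symbol. -/
def IsSymbolOrZero (𝔉 : SymbolFrame E ι) (ν : ℝ) (g : E → ℝ) : Prop :=
  ∀ N, ∃ f : E → ℝ, 𝔉.IsSymbol N ν f ∧ ∀ z ∈ 𝔉.domain, g z = f z ∨ g z = 0

theorem deriv_eq_or_eq_zero_of_left {g f : ℝ → ℝ} {x f' : ℝ}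
    (hgf : ∀ s ≤ x, g s = f s ∨ g s = 0) (hf : HasDerivAt f f' x) :
    deriv g x = f' ∨ deriv g x = 0 := by
  by_cases hg : DifferentiableAt ℝ g x
  · by_contra! hne
    have hg0 := hg.hasDerivAt.eventually_ne (c := 0) hne.2
    have hgf0 := (hg.hasDerivAt.sub hf).eventually_ne (c := 0) (sub_ne_zero.2 hne.1)
    have hlt : ∀ᶠ s in 𝓝[<] x, s < x := self_mem_nhdsWithin
    have hle : 𝓝[<] x ≤ 𝓝[≠] x := nhdsWithin_mono _ fun y hy => ne_of_lt hy
    obtain ⟨s, hgs, hgfs, hs⟩ :=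
      ((hg0.filter_mono hle).and ((hgf0.filter_mono hle).and hlt)).exists
    rcases hgf s hs.le with h | h
    · exact hgfs (sub_eq_zero.2 h)
    · exact hgs h
  · exact .inr (deriv_zero_of_not_differentiableAt hg)

namespace IsSymbolOrZero

variable {g g' : E → ℝ}

theorem isBigO (hg : 𝔉.IsSymbolOrZero ν g) : g =O[𝓟 𝔉.domain] fun z => 𝔉.scale z ^ ν := by
  obtain ⟨f, hf, hgf⟩ := hg 0
  refine (IsBigO.of_norm_eventuallyLE (eventually_principal.2 fun z hz => ?_)).trans
    hf.isBigO.norm_left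
  rcases hgf z hz with h | h <;> simp [h]

theorem lineDeriv (hg : 𝔉.IsSymbolOrZero ν g) (i : ι)
    (hback : ∀ z ∈ 𝔉.domain, ∀ s ≤ (0 : ℝ), z + s • 𝔉.dir i ∈ 𝔉.domain)
    (hg' : ∀ z ∈ 𝔉.domain, g' z = lineDeriv ℝ g z (𝔉.dir i) ∨ g' z = 0) :
    𝔉.IsSymbolOrZero (ν - 𝔉.weight i) g' := fun N => by
  obtain ⟨f, ⟨-, f', hf', hN⟩, hgf⟩ := hg (N + 1)
  refine ⟨_, hN i, fun z hz => ?_⟩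
  rcases hg' z hz with h | h
  · rw [h]
    exact deriv_eq_or_eq_zero_of_left (fun s hs => hgf _ (hback z hz s hs))
      ((hf' z hz).hasLineDerivAt (𝔉.dir i))
  · exact .inr h

end IsSymbolOrZero
end OneSided

end SymbolFrame
end SymbolClasses

section Spacetime

open SymbolFrame

variable {m : ℕ} {τ : ℝ → ℝ} {hτ : ∀ t ∈ Iic (0 : ℝ), 1 ≤ τ t} {ν : ℝ} {φ : F5 m}

/-- Labels of the coordinates `(r, θ)` (left summand) and `(ρ, ω)` (right summand) of phase space,
so that `Sum.swap` exchanges each position with its conjugate momentum. -/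
abbrev PhaseIndex (m : ℕ) : Type := (Unit ⊕ Fin m) ⊕ (Unit ⊕ Fin m)

/-- The coordinate vectors of phase space. -/
def phaseDir {m : ℕ} : PhaseIndex m → Phase m :=
  Sum.elim (Sum.elim (fun _ => (1, 0, 0, 0)) fun j => (0, Pi.single j 1, 0, 0))
    (Sum.elim (fun _ => (0, 0, 1, 0)) fun j => (0, 0, 0, Pi.single j 1))

/-- Each radial derivative gains one power of decay, the other derivatives none. -/
def phaseWeight {m : ℕ} : PhaseIndex m → ℝ :=
  Sum.elim (Sum.elim (fun _ => 1) 0) 0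

/-- The symbol classes of functions of `(t, r, θ, ρ, ω)`, `t ≤ 0`, in which `∂_t` and `∂_r` gain
a factor `τ(t)⁻¹` each. -/
def spacetimeFrame (m : ℕ) (τ : ℝ → ℝ) (hτ : ∀ t ∈ Iic (0 : ℝ), 1 ≤ τ t) :
    SymbolFrame (ℝ × Phase m) (Unit ⊕ PhaseIndex m) :=
  (SymbolFrame.time (Iic 0) τ hτ).prod phaseDir phaseWeight

/-- A function of `(t, r, θ, ρ, ω)` as a function on the vector space `ℝ × Phase m`. -/
def onSpacetime (φ : F5 m) (z : ℝ × Phase m) : ℝ := φ z.1 z.2.1 z.2.2.1 z.2.2.2.1 z.2.2.2.2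

theorem add_smul_dir_mem_spacetimeFrame_domain (i : Unit ⊕ PhaseIndex m) {z : ℝ × Phase m}
    (hz : z ∈ (spacetimeFrame m τ hτ).domain) {s : ℝ} (hs : s ≤ 0) :
    z + s • (spacetimeFrame m τ hτ).dir i ∈ (spacetimeFrame m τ hτ).domain := by
  change z.1 ≤ 0 at hz
  rcases i with i | i
  · simpa [spacetimeFrame, SymbolFrame.prod, SymbolFrame.time] using by linarith
  · simpa [spacetimeFrame, SymbolFrame.prod, SymbolFrame.time] using hz

theorem deriv_eq_lineDeriv_one (f : ℝ → ℝ) (x : ℝ) : deriv f x = lineDeriv ℝ f x 1 := by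
  simpa [lineDeriv] using (deriv_comp_const_add f x 0).symm

theorem onSpacetime_DT (z : ℝ × Phase m) :
    onSpacetime (DT φ) z =
      lineDeriv ℝ (onSpacetime φ) z ((spacetimeFrame m τ hτ).dir (.inl ())) := by
  simpa [onSpacetime, DT, lineDeriv, spacetimeFrame, SymbolFrame.prod, SymbolFrame.time] using
    deriv_eq_lineDeriv_one (fun s => φ s z.2.1 z.2.2.1 z.2.2.2.1 z.2.2.2.2) z.1

theorem onSpacetime_DR (z : ℝ × Phase m) :
    onSpacetime (DR φ) z = lineDeriv ℝ (onSpacetime φ) z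
      ((spacetimeFrame m τ hτ).dir (.inr (.inl (.inl ())))) := by
  simpa [onSpacetime, DR, lineDeriv, spacetimeFrame, SymbolFrame.prod, phaseDir] using
    deriv_eq_lineDeriv_one (fun s => φ z.1 s z.2.2.1 z.2.2.2.1 z.2.2.2.2) z.2.1

theorem onSpacetime_DRho (z : ℝ × Phase m) :
    onSpacetime (DRho φ) z = lineDeriv ℝ (onSpacetime φ) z
      ((spacetimeFrame m τ hτ).dir (.inr (.inr (.inl ())))) := by
  simpa [onSpacetime, DRho, lineDeriv, spacetimeFrame, SymbolFrame.prod, phaseDir] using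
    deriv_eq_lineDeriv_one (fun s => φ z.1 z.2.1 z.2.2.1 s z.2.2.2.2) z.2.2.2.1

theorem fderiv_eq_lineDeriv_or_eq_zero {E : Type*} [NormedAddCommGroup E] [NormedSpace ℝ E]
    (f : E → ℝ) (x v : E) : fderiv ℝ f x v = lineDeriv ℝ f x v ∨ fderiv ℝ f x v = 0 := by
  by_cases hf : DifferentiableAt ℝ f x
  · exact .inl hf.lineDeriv_eq_fderiv.symm
  · exact .inr (by simp [fderiv_zero_of_not_differentiableAt hf])

theorem onSpacetime_DTheta (j : Fin m) (z : ℝ × Phase m) :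
    onSpacetime (DTheta j φ) z = lineDeriv ℝ (onSpacetime φ) z
      ((spacetimeFrame m τ hτ).dir (.inr (.inl (.inr j)))) ∨ onSpacetime (DTheta j φ) z = 0 := by
  simpa [onSpacetime, DTheta, lineDeriv, spacetimeFrame, SymbolFrame.prod, phaseDir] using
    fderiv_eq_lineDeriv_or_eq_zero (fun y => φ z.1 z.2.1 y z.2.2.2.1 z.2.2.2.2) z.2.2.1
      (Pi.single j 1)

theorem onSpacetime_DOmega (j : Fin m) (z : ℝ × Phase m) :
    onSpacetime (DOmega j φ) z = lineDeriv ℝ (onSpacetime φ) z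
      ((spacetimeFrame m τ hτ).dir (.inr (.inr (.inr j)))) ∨ onSpacetime (DOmega j φ) z = 0 := by
  simpa [onSpacetime, DOmega, lineDeriv, spacetimeFrame, SymbolFrame.prod, phaseDir] using
    fderiv_eq_lineDeriv_or_eq_zero (fun y => φ z.1 z.2.1 z.2.2.1 z.2.2.2.1 y) z.2.2.2.2
      (Pi.single j 1)

theorem isSymbolOrZero_of_lineDeriv {φ' : F5 m}
    (hφ : (spacetimeFrame m τ hτ).IsSymbolOrZero ν (onSpacetime φ)) (i : Unit ⊕ PhaseIndex m)
    (h : ∀ z, onSpacetime φ' z = lineDeriv ℝ (onSpacetime φ) z ((spacetimeFrame m τ hτ).dir i) ∨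
      onSpacetime φ' z = 0) :
    (spacetimeFrame m τ hτ).IsSymbolOrZero (ν - (spacetimeFrame m τ hτ).weight i)
      (onSpacetime φ') :=
  hφ.lineDeriv i (fun _ hz _ hs => add_smul_dir_mem_spacetimeFrame_domain i hz hs) fun z _ => h z

theorem isSymbolOrZero_iterate {D : F5 m → F5 m} {w : ℝ}
    (hD : ∀ {ν φ}, (spacetimeFrame m τ hτ).IsSymbolOrZero ν (onSpacetime φ) →
      (spacetimeFrame m τ hτ).IsSymbolOrZero (ν - w) (onSpacetime (D φ)))
    (hφ : (spacetimeFrame m τ hτ).IsSymbolOrZero ν (onSpacetime φ)) (n : ℕ) :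
    (spacetimeFrame m τ hτ).IsSymbolOrZero (ν - n * w) (onSpacetime (D^[n] φ)) := by
  induction n with
  | zero => simpa using hφ
  | succ n ih =>
    rw [Function.iterate_succ_apply']
    convert hD ih using 1
    push_cast
    ring

theorem isSymbolOrZero_foldr {D : Fin m → F5 m → F5 m}
    (hD : ∀ {φ} j, (spacetimeFrame m τ hτ).IsSymbolOrZero ν (onSpacetime φ) →
      (spacetimeFrame m τ hτ).IsSymbolOrZero ν (onSpacetime (D j φ)))
    (hφ : (spacetimeFrame m τ hτ).IsSymbolOrZero ν (onSpacetime φ)) (α : List (Fin m)) :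
    (spacetimeFrame m τ hτ).IsSymbolOrZero ν (onSpacetime (α.foldr D φ)) := by
  induction α with
  | nil => exact hφ
  | cons j α ih => exact hD j ih

theorem isSymbolOrZero_mixedDeriv
    (hφ : (spacetimeFrame m τ hτ).IsSymbolOrZero ν (onSpacetime φ))
    (k l n : ℕ) (α β : List (Fin m)) :
    (spacetimeFrame m τ hτ).IsSymbolOrZero (ν - n - k)
      (onSpacetime (mixedDeriv k α l β n φ)) := by
  have hT := isSymbolOrZero_iterate (D := DT) (w := 1)
    (fun h => isSymbolOrZero_of_lineDeriv h (.inl ()) fun z => .inl (onSpacetime_DT z)) hφ n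
  have hOmega := isSymbolOrZero_foldr (fun j h => by
    simpa [spacetimeFrame, SymbolFrame.prod, phaseWeight] using isSymbolOrZero_of_lineDeriv h _
      fun z => onSpacetime_DOmega j z) hT β
  have hRho := isSymbolOrZero_iterate (w := 0) (fun h =>
    isSymbolOrZero_of_lineDeriv h _ fun z => .inl (onSpacetime_DRho z)) hOmega l
  have hTheta := isSymbolOrZero_foldr (fun j h => by
    simpa [spacetimeFrame, SymbolFrame.prod, phaseWeight] using isSymbolOrZero_of_lineDeriv h _
      fun z => onSpacetime_DTheta j z) hRho α
  simpa [mixedDeriv] using isSymbolOrZero_iterate (w := 1) (fun h =>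
    isSymbolOrZero_of_lineDeriv h _ fun z => .inl (onSpacetime_DR z)) hTheta k

end Spacetime

section Coefficients

variable {m : ℕ} {U : Set (Fin m → ℝ)} {f : ℝ → (Fin m → ℝ) → ℝ}

/-- Smoothness of a function of `(r, θ)` on the end `(1, ∞) × U`. -/
def SmoothOnEnd (U : Set (Fin m → ℝ)) (f : ℝ → (Fin m → ℝ) → ℝ) : Prop :=
  ContDiffOn ℝ (⊤ : ℕ∞) (fun z : ℝ × (Fin m → ℝ) => f z.1 z.2) (Ioi (1 : ℝ) ×ˢ U)

namespace SmoothOnEnd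

theorem end_mem_nhds (hU : IsOpen U) {z : ℝ × (Fin m → ℝ)} (hz : z ∈ Ioi (1 : ℝ) ×ˢ U) :
    Ioi (1 : ℝ) ×ˢ U ∈ 𝓝 z :=
  (isOpen_Ioi.prod hU).mem_nhds hz

theorem contDiffAt (hU : IsOpen U) (hf : SmoothOnEnd U f) {z : ℝ × (Fin m → ℝ)}
    (hz : z ∈ Ioi (1 : ℝ) ×ˢ U) :
    ContDiffAt ℝ (⊤ : ℕ∞) (fun z : ℝ × (Fin m → ℝ) => f z.1 z.2) z :=
  ContDiffOn.contDiffAt hf (end_mem_nhds hU hz)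

theorem differentiableAt (hU : IsOpen U) (hf : SmoothOnEnd U f) {z : ℝ × (Fin m → ℝ)}
    (hz : z ∈ Ioi (1 : ℝ) ×ˢ U) :
    DifferentiableAt ℝ (fun z : ℝ × (Fin m → ℝ) => f z.1 z.2) z :=
  (hf.contDiffAt hU hz).differentiableAt (by simp)

theorem pderivR_eq_fderiv (hU : IsOpen U) (hf : SmoothOnEnd U f) {z : ℝ × (Fin m → ℝ)}
    (hz : z ∈ Ioi (1 : ℝ) ×ˢ U) :
    pderivR f z.1 z.2 = fderiv ℝ (fun z : ℝ × (Fin m → ℝ) => f z.1 z.2) z (1, 0) := by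
  rw [← (hf.differentiableAt hU hz).lineDeriv_eq_fderiv]
  simpa [pderivR, lineDeriv] using deriv_eq_lineDeriv_one (fun s => f s z.2) z.1

theorem pderivTheta_eq_fderiv (hU : IsOpen U) (hf : SmoothOnEnd U f) (j : Fin m)
    {z : ℝ × (Fin m → ℝ)} (hz : z ∈ Ioi (1 : ℝ) ×ˢ U) :
    pderivTheta j f z.1 z.2 =
      fderiv ℝ (fun z : ℝ × (Fin m → ℝ) => f z.1 z.2) z (0, Pi.single j 1) := by
  have hfθ : DifferentiableAt ℝ (f z.1) z.2 :=
    (hf.differentiableAt hU hz).comp z.2 (f := fun y => (z.1, y)) (by fun_prop)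
  rw [← (hf.differentiableAt hU hz).lineDeriv_eq_fderiv, pderivTheta, ← hfθ.lineDeriv_eq_fderiv]
  simp [lineDeriv]

theorem fderiv_apply (hU : IsOpen U) (hf : SmoothOnEnd U f) (v : ℝ × (Fin m → ℝ)) :
    ContDiffOn ℝ (⊤ : ℕ∞)
      (fun z => fderiv ℝ (fun z : ℝ × (Fin m → ℝ) => f z.1 z.2) z v) (Ioi (1 : ℝ) ×ˢ U) :=
  (ContDiffOn.fderiv_of_isOpen hf (isOpen_Ioi.prod hU) (by simp)).clm_apply contDiffOn_const

protected theorem pderivR (hU : IsOpen U) (hf : SmoothOnEnd U f) : SmoothOnEnd U (pderivR f) :=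
  (hf.fderiv_apply hU (1, 0)).congr fun _ hz => hf.pderivR_eq_fderiv hU hz

protected theorem pderivTheta (hU : IsOpen U) (hf : SmoothOnEnd U f) (j : Fin m) :
    SmoothOnEnd U (pderivTheta j f) :=
  (hf.fderiv_apply hU (0, Pi.single j 1)).congr fun _ hz => hf.pderivTheta_eq_fderiv hU j hz

theorem iterate_pderivR (hU : IsOpen U) (hf : SmoothOnEnd U f) (k : ℕ) :
    SmoothOnEnd U (pderivR^[k] f) := by
  induction k with
  | zero => exact hf
  | succ k ih => simpa only [Function.iterate_succ_apply'] using ih.pderivR hU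

protected theorem thetaDerivs (hU : IsOpen U) (hf : SmoothOnEnd U f) (α : List (Fin m)) :
    SmoothOnEnd U (thetaDerivs α f) := by
  induction α with
  | nil => exact hf
  | cons j α ih => exact ih.pderivTheta hU j

theorem pderivTheta_pderivR (hU : IsOpen U) (hf : SmoothOnEnd U f) (j : Fin m)
    {z : ℝ × (Fin m → ℝ)} (hz : z ∈ Ioi (1 : ℝ) ×ˢ U) :
    pderivTheta j (pderivR f) z.1 z.2 =
      pderivR (pderivTheta j f) z.1 z.2 := by
  have hR : (fun z : ℝ × (Fin m → ℝ) => pderivR f z.1 z.2) =ᶠ[𝓝 z]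
      fun z => fderiv ℝ (fun z : ℝ × (Fin m → ℝ) => f z.1 z.2) z (1, 0) := by
    filter_upwards [end_mem_nhds hU hz] with y hy using hf.pderivR_eq_fderiv hU hy
  have hθ : (fun z : ℝ × (Fin m → ℝ) => pderivTheta j f z.1 z.2) =ᶠ[𝓝 z]
      fun z => fderiv ℝ (fun z : ℝ × (Fin m → ℝ) => f z.1 z.2) z (0, Pi.single j 1) := by
    filter_upwards [end_mem_nhds hU hz] with y hy using hf.pderivTheta_eq_fderiv hU j hy
  have hdiff : DifferentiableAt ℝ (fderiv ℝ fun z : ℝ × (Fin m → ℝ) => f z.1 z.2) z :=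
    ((hf.contDiffAt hU hz).fderiv_right (m := (⊤ : ℕ∞)) (by simp)).differentiableAt (by simp)
  have hsymm : IsSymmSndFDerivAt ℝ (fun z : ℝ × (Fin m → ℝ) => f z.1 z.2) z :=
    (hf.contDiffAt hU hz).isSymmSndFDerivAt
      (by simpa using WithTop.coe_le_coe.2 (le_top : (2 : ℕ∞) ≤ ⊤))
  rw [(hf.pderivR hU).pderivTheta_eq_fderiv hU j hz, (hf.pderivTheta hU j).pderivR_eq_fderiv hU hz,
    hR.fderiv_eq, hθ.fderiv_eq, fderiv_clm_apply hdiff (differentiableAt_const _),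
    fderiv_clm_apply hdiff (differentiableAt_const _)]
  simpa using hsymm.eq _ _

theorem pderivTheta_iterate_pderivR (hU : IsOpen U) (hf : SmoothOnEnd U f) (j : Fin m) (k : ℕ)
    {z : ℝ × (Fin m → ℝ)} (hz : z ∈ Ioi (1 : ℝ) ×ˢ U) :
    pderivTheta j (pderivR^[k] f) z.1 z.2 =
      pderivR^[k] (pderivTheta j f) z.1 z.2 := by
  induction k generalizing z with
  | zero => rfl
  | succ k ih =>
    simp only [Function.iterate_succ_apply']
    rw [(hf.iterate_pderivR hU k).pderivTheta_pderivR hU j hz]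
    refine EventuallyEq.deriv_eq ?_
    filter_upwards [Ioi_mem_nhds hz.1] with s hs using ih (z := (s, z.2)) ⟨hs, hz.2⟩

end SmoothOnEnd

end Coefficients

section PhaseSymbols

open SymbolFrame Asymptotics

variable {m : ℕ} {U K : Set (Fin m → ℝ)} {C₀ : ℝ} {N : ℕ} {ν : ℝ}

/-- The classical symbol classes `S^ν` on the part of phase space over `(1, ∞) × K` with momenta
bounded by `C₀`. -/
def phaseFrame (K : Set (Fin m → ℝ)) (C₀ : ℝ) : SymbolFrame (Phase m) (PhaseIndex m) where
  dir := phaseDir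
  weight := phaseWeight
  scale x := x.1
  domain := {x | 1 < x.1 ∧ x.2.1 ∈ K ∧ |x.2.2.1| ≤ C₀ ∧ ‖x.2.2.2‖ ≤ C₀}
  one_le_scale _ hx := hx.1.le

theorem phaseWeight_nonneg (i : PhaseIndex m) : 0 ≤ phaseWeight i := by
  rcases i with (_ | _) | (_ | _) <;> simp [phaseWeight]

theorem isSymbol_succ_of_position {F : ℝ × (Fin m → ℝ) → ℝ}
    {F' : ℝ × (Fin m → ℝ) → ℝ × (Fin m → ℝ) →L[ℝ] ℝ}
    (hO : (fun x : Phase m => F (x.1, x.2.1)) =O[𝓟 (phaseFrame K C₀).domain] fun x => x.1 ^ ν)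
    (hF : ∀ z ∈ Ioi (1 : ℝ) ×ˢ K, HasFDerivAt F (F' z) z)
    (hr : (phaseFrame K C₀).IsSymbol N (ν - 1) (fun x => F' (x.1, x.2.1) (1, 0)))
    (hθ : ∀ j, (phaseFrame K C₀).IsSymbol N ν (fun x => F' (x.1, x.2.1) (0, Pi.single j 1))) :
    (phaseFrame K C₀).IsSymbol (N + 1) ν (fun x => F (x.1, x.2.1)) := by
  let proj : Phase m →L[ℝ] ℝ × (Fin m → ℝ) := (ContinuousLinearMap.fst ℝ _ _).prod
    (ContinuousLinearMap.fst ℝ _ _ ∘L ContinuousLinearMap.snd ℝ _ _)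
  refine ⟨hO, fun x => F' (x.1, x.2.1) ∘L proj,
    fun x hx => (hF (x.1, x.2.1) ⟨hx.1, hx.2.1⟩).comp x proj.hasFDerivAt, ?_⟩
  have hmomentum (i : Unit ⊕ Fin m) : proj (phaseDir (.inr i)) = 0 := by rcases i with _ | _ <;> rfl
  rintro ((_ | j) | i)
  · simpa [phaseFrame, phaseDir, phaseWeight, proj] using hr
  · simpa [phaseFrame, phaseDir, phaseWeight, proj] using hθ j
  · simpa [phaseFrame, phaseWeight, hmomentum i] using IsSymbol.zero

theorem end_prod_mem_nhds (hU : IsOpen U) (hKU : K ⊆ U) {x : Phase m}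
    (hx : x ∈ (phaseFrame K C₀).domain) :
    ∀ᶠ y in 𝓝 x, (y.1, y.2.1) ∈ Ioi (1 : ℝ) ×ˢ U :=
  (by fun_prop : Continuous fun y : Phase m => (y.1, y.2.1)).continuousAt.eventually
    (SmoothOnEnd.end_mem_nhds hU ⟨hx.1, hKU hx.2.1⟩)

theorem isSymbol_iterate_pderivR_thetaDerivs (hU : IsOpen U) (hKU : K ⊆ U)
    {f : ℝ → (Fin m → ℝ) → ℝ} (hf : SmoothOnEnd U f) (hdecay : DecayOn f ν 1 K)
    (k : ℕ) (α : List (Fin m)) :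
    (phaseFrame K C₀).IsSymbol N (-ν - k) (fun x => pderivR^[k] (thetaDerivs α f) x.1 x.2.1) := by
  have hO (k : ℕ) (α : List (Fin m)) : (fun x : Phase m => pderivR^[k] (thetaDerivs α f) x.1 x.2.1)
      =O[𝓟 (phaseFrame K C₀).domain] fun x => x.1 ^ (-ν - k) := by
    obtain ⟨C, -, hC⟩ := hdecay k α
    refine IsBigO.of_bound C (eventually_principal.2 fun x hx => ?_)
    rw [Real.norm_of_nonneg (rpow_nonneg (one_pos.trans hx.1).le _)]
    exact hC x.1 hx.1 x.2.1 hx.2.1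
  induction N generalizing k α with
  | zero => exact hO k α
  | succ N ih =>
    have hsmooth := (hf.thetaDerivs hU α).iterate_pderivR hU k
    refine isSymbol_succ_of_position (F := fun z => pderivR^[k] (thetaDerivs α f) z.1 z.2)
      (hO k α) (fun z hz => (hsmooth.differentiableAt hU ⟨hz.1, hKU hz.2⟩).hasFDerivAt) ?_ ?_
    · refine ((ih (k + 1) α).mono (by push_cast; linarith)).congr fun x hx => ?_
      filter_upwards [end_prod_mem_nhds hU hKU hx] with y hy
      rw [Function.iterate_succ_apply', ← hsmooth.pderivR_eq_fderiv hU hy]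
    · refine fun j => (ih k (j :: α)).congr fun x hx => ?_
      filter_upwards [end_prod_mem_nhds hU hKU hx] with y hy
      rw [← hsmooth.pderivTheta_eq_fderiv hU j hy,
        (hf.thetaDerivs hU α).pderivTheta_iterate_pderivR hU j k hy]
      rfl

theorem isSymbol_of_decayOn (hU : IsOpen U) (hKU : K ⊆ U) {f : ℝ → (Fin m → ℝ) → ℝ}
    (hf : SmoothOnEnd U f) (hdecay : DecayOn f ν 1 K) :
    (phaseFrame K C₀).IsSymbol N (-ν) (fun x => f x.1 x.2.1) := by
  simpa [thetaDerivs] using isSymbol_iterate_pderivR_thetaDerivs hU hKU hf hdecay 0 []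

theorem isSymbol_of_angular (hU : IsOpen U) (hK : IsCompact K) (hKU : K ⊆ U)
    {g : (Fin m → ℝ) → ℝ} (hg : ContDiffOn ℝ (⊤ : ℕ∞) g U) :
    (phaseFrame K C₀).IsSymbol N 0 (fun x => g x.2.1) := by
  have hO {g : (Fin m → ℝ) → ℝ} (hg : ContDiffOn ℝ (⊤ : ℕ∞) g U) : (fun x : Phase m => g x.2.1)
      =O[𝓟 (phaseFrame K C₀).domain] fun x => x.1 ^ (0 : ℝ) := by
    obtain ⟨C, hC⟩ := hK.exists_bound_of_continuousOn (hg.continuousOn.mono hKU)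
    exact IsBigO.of_bound C (eventually_principal.2 fun x hx => by simpa using hC x.2.1 hx.2.1)
  induction N generalizing g with
  | zero => exact hO hg
  | succ N ih =>
    refine isSymbol_succ_of_position (F := fun z => g z.2)
      (F' := fun z => fderiv ℝ g z.2 ∘L ContinuousLinearMap.snd ℝ _ _) (hO hg) ?_ ?_ fun j => ?_
    · exact fun z hz => ((hg.contDiffAt (hU.mem_nhds (hKU hz.2))).differentiableAt
        (by simp)).hasFDerivAt.comp z hasFDerivAt_snd
    · simpa using IsSymbol.zero
    · simpa using ih ((hg.fderiv_of_isOpen hU (by simp)).clm_apply contDiffOn_const)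

theorem isSymbol_radius : (phaseFrame K C₀).IsSymbol N 1 (fun x => x.1) := by
  refine IsSymbol.of_clm (ContinuousLinearMap.fst ℝ ℝ _ : Phase m →L[ℝ] ℝ) ?_ ?_
  · exact IsBigO.of_bound 1 (.of_forall fun x => by simp [phaseFrame])
  · rintro ((_ | _) | (_ | _)) <;> simp [phaseFrame, phaseDir, phaseWeight]

theorem isSymbol_zero_of_clm {Y : Type*} [NormedAddCommGroup Y] [NormedSpace ℝ Y]
    (L : Phase m →L[ℝ] Y) (hL : L (phaseDir (.inl (.inl ()))) = 0)
    {M : ℝ} (hM : ∀ x ∈ (phaseFrame K C₀).domain, ‖L x‖ ≤ M) :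
    (phaseFrame K C₀).IsSymbol N 0 L := by
  refine IsSymbol.of_clm L ?_ ?_
  · exact IsBigO.of_bound M (eventually_principal.2 fun x hx => by simpa using hM x hx)
  · rintro ((_ | _) | (_ | _))
    · exact .inl hL
    all_goals simp [phaseFrame, phaseWeight]

theorem isSymbol_inv_radius : (phaseFrame K C₀).IsSymbol N (-1) (fun x => x.1⁻¹) :=
  isSymbol_radius.inv <| by simpa [phaseFrame] using isBigO_refl _ _

theorem isSymbol_theta (hK : IsCompact K) : (phaseFrame K C₀).IsSymbol N 0 (fun x => x.2.1) := by
  obtain ⟨M, hM⟩ := hK.isBounded.exists_norm_le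
  exact isSymbol_zero_of_clm
    (ContinuousLinearMap.fst ℝ _ _ ∘L ContinuousLinearMap.snd ℝ _ _ : Phase m →L[ℝ] Fin m → ℝ)
    (by simp [phaseDir]) fun x hx => hM _ hx.2.1

theorem isSymbol_rho : (phaseFrame K C₀).IsSymbol N 0 (fun x => x.2.2.1) :=
  isSymbol_zero_of_clm (ContinuousLinearMap.fst ℝ _ _ ∘L ContinuousLinearMap.snd ℝ _ _ ∘L
    ContinuousLinearMap.snd ℝ _ _ : Phase m →L[ℝ] ℝ) (by simp [phaseDir]) fun _ hx => hx.2.2.1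

theorem isSymbol_omega : (phaseFrame K C₀).IsSymbol N 0 (fun x => x.2.2.2) :=
  isSymbol_zero_of_clm (ContinuousLinearMap.snd ℝ _ _ ∘L ContinuousLinearMap.snd ℝ _ _ ∘L
    ContinuousLinearMap.snd ℝ _ _ : Phase m →L[ℝ] Fin m → ℝ) (by simp [phaseDir])
    fun _ hx => hx.2.2.2

theorem isSymbol_omega_apply (j : Fin m) :
    (phaseFrame K C₀).IsSymbol N 0 (fun x => x.2.2.2 j) := by
  simpa using (IsSymbol.const (ContinuousLinearMap.proj j : (Fin m → ℝ) →L[ℝ] ℝ)).clm_apply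
    isSymbol_omega

theorem isSymbol_quadratic_div_sq {b : Fin m → Fin m → Phase m → ℝ}
    (hb : ∀ j k, (phaseFrame K C₀).IsSymbol N ν (b j k)) :
    (phaseFrame K C₀).IsSymbol N (ν - 2)
      (fun x => (∑ j, ∑ k, b j k x * x.2.2.2 j * x.2.2.2 k) / x.1 ^ 2) := by
  have hsum : (phaseFrame K C₀).IsSymbol N ν
      (fun x => ∑ j, ∑ k, b j k x * x.2.2.2 j * x.2.2.2 k) :=
    IsSymbol.sum _ fun j _ => IsSymbol.sum _ fun k _ => by
      simpa using ((hb j k).mul (isSymbol_omega_apply j)).mul (isSymbol_omega_apply k)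
  refine ((hsum.mul (isSymbol_inv_radius.mul isSymbol_inv_radius)).mono (by linarith)).congr
    fun _ _ => .of_forall fun x => ?_
  simp only [div_eq_mul_inv, sq, mul_inv]

variable {μ : ℝ} (c : Coeffs m μ U)

theorem isSymbol_energy_sub_sq_rho (hμ : 0 ≤ μ) (hU : IsOpen U) (hK : IsCompact K) (hKU : K ⊆ U) :
    (phaseFrame K C₀).IsSymbol N (-1)
      (fun x => c.p x.1 x.2.1 x.2.2.1 x.2.2.2 - x.2.2.1 ^ 2) := by
  have hh := isSymbol_quadratic_div_sq (C₀ := C₀) (N := N)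
    fun j k => isSymbol_of_angular hU hK hKU (c.hM_smooth j k)
  have h0 := (isSymbol_of_decayOn (C₀ := C₀) (N := N) hU hKU c.a0_smooth
    (c.a0_decay K hK hKU)).mul (isSymbol_rho.mul isSymbol_rho)
  have h1 := (IsSymbol.sum Finset.univ fun j _ => ((isSymbol_of_decayOn (C₀ := C₀) (N := N) hU hKU
    (f := fun r θ => c.a1 r θ j) (c.a1_smooth j) (c.a1_decay K hK hKU j)).mul
    isSymbol_rho).mul (isSymbol_omega_apply j)).mul isSymbol_inv_radius
  have h2 := isSymbol_quadratic_div_sq (C₀ := C₀) (N := N)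
    fun j k => isSymbol_of_decayOn hU hKU (f := fun r θ => c.a2 r θ j k) (c.a2_smooth j k)
      (c.a2_decay K hK hKU j k)
  refine ((((hh.mono (by linarith)).add (h0.mono (by linarith))).add
    (h1.mono (by linarith))).add (h2.mono (by linarith))).congr
    fun _ _ => .of_forall fun x => ?_
  simp only [Coeffs.p, energy]
  ring

theorem exists_hasFDerivAt_energy (hμ : 0 ≤ μ) (hU : IsOpen U) (hK : IsCompact K) (hKU : K ⊆ U)
    (C₀ : ℝ) (N : ℕ) :
    ∃ P' : Phase m → Phase m →L[ℝ] ℝ,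
      (∀ x ∈ (phaseFrame K C₀).domain,
        HasFDerivAt (fun x : Phase m => c.p x.1 x.2.1 x.2.2.1 x.2.2.2) (P' x) x) ∧
      ∀ i, (phaseFrame K C₀).IsSymbol N (phaseWeight i.swap - 1) (fun x => P' x (phaseDir i)) := by
  obtain ⟨-, q', hq', hqN⟩ :=
    isSymbol_energy_sub_sq_rho (C₀ := C₀) (N := N + 1) c hμ hU hK hKU
  let rho : Phase m →L[ℝ] ℝ := ContinuousLinearMap.fst ℝ _ _ ∘L
    ContinuousLinearMap.snd ℝ _ _ ∘L ContinuousLinearMap.snd ℝ _ _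
  refine ⟨fun x => q' x + (2 * x.2.2.1) • rho, fun x hx => ?_, fun i => ?_⟩
  · refine ((hq' x hx).add ((rho.hasFDerivAt (x := x)).pow 2)).congr_of_eventuallyEq
      (.of_forall fun y => by simp [rho]) |>.congr_fderiv (by simp [rho])
  · have hq : (phaseFrame K C₀).IsSymbol N (phaseWeight i.swap - 1) (fun x => q' x (phaseDir i)) :=
      (hqN i).mono (show -1 - phaseWeight i ≤ _ by
        linarith [phaseWeight_nonneg i, phaseWeight_nonneg i.swap])
    refine hq.add ?_
    rcases i with (_ | _) | (_ | _)
    · simpa [rho, phaseDir] using IsSymbol.zero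
    · simpa [rho, phaseDir] using IsSymbol.zero
    · simpa [rho, phaseDir, phaseWeight] using isSymbol_rho.const_smul 2
    · simpa [rho, phaseDir] using IsSymbol.zero

end PhaseSymbols

section HamiltonFlow

open SymbolFrame Asymptotics

variable {m : ℕ} {p : ℝ → (Fin m → ℝ) → ℝ → (Fin m → ℝ) → ℝ} {γ : ℝ → Phase m}

/-- The components of the Hamiltonian vector field of a function with differential `L`. -/
def hamField (L : Phase m →L[ℝ] ℝ) : PhaseIndex m → ℝ :=
  Sum.elim (fun i => L (phaseDir (.inr i))) fun i => -L (phaseDir (.inl i))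

section Partials

variable {L : Phase m →L[ℝ] ℝ} {x : Phase m}

theorem pdR_eq (h : HasFDerivAt (fun x : Phase m => p x.1 x.2.1 x.2.2.1 x.2.2.2) L x) :
    pdR p x.1 x.2.1 x.2.2.1 x.2.2.2 = L (phaseDir (.inl (.inl ()))) := by
  rw [← (h.hasLineDerivAt _).lineDeriv]
  simpa [pdR, lineDeriv, phaseDir] using
    deriv_eq_lineDeriv_one (fun s => p s x.2.1 x.2.2.1 x.2.2.2) x.1

theorem pdRho_eq (h : HasFDerivAt (fun x : Phase m => p x.1 x.2.1 x.2.2.1 x.2.2.2) L x) :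
    pdRho p x.1 x.2.1 x.2.2.1 x.2.2.2 = L (phaseDir (.inr (.inl ()))) := by
  rw [← (h.hasLineDerivAt _).lineDeriv]
  simpa [pdRho, lineDeriv, phaseDir] using
    deriv_eq_lineDeriv_one (fun s => p x.1 x.2.1 s x.2.2.2) x.2.2.1

theorem pdTheta_eq (h : HasFDerivAt (fun x : Phase m => p x.1 x.2.1 x.2.2.1 x.2.2.2) L x)
    (j : Fin m) : pdTheta p j x.1 x.2.1 x.2.2.1 x.2.2.2 = L (phaseDir (.inl (.inr j))) := by
  have hθ : DifferentiableAt ℝ (fun y => p x.1 y x.2.2.1 x.2.2.2) x.2.1 :=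
    h.differentiableAt.comp x.2.1 (f := fun y => (x.1, y, x.2.2)) (by fun_prop)
  rw [← (h.hasLineDerivAt _).lineDeriv, pdTheta, ← hθ.lineDeriv_eq_fderiv]
  simp [lineDeriv, phaseDir]

theorem pdOmega_eq (h : HasFDerivAt (fun x : Phase m => p x.1 x.2.1 x.2.2.1 x.2.2.2) L x)
    (j : Fin m) : pdOmega p j x.1 x.2.1 x.2.2.1 x.2.2.2 = L (phaseDir (.inr (.inr j))) := by
  have hω : DifferentiableAt ℝ (fun y => p x.1 x.2.1 x.2.2.1 y) x.2.2.2 :=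
    h.differentiableAt.comp x.2.2.2 (f := fun y => (x.1, x.2.1, x.2.2.1, y)) (by fun_prop)
  rw [← (h.hasLineDerivAt _).lineDeriv, pdOmega, ← hω.lineDeriv_eq_fderiv]
  simp [lineDeriv, phaseDir]

end Partials

theorem sum_smul_phaseDir (X : PhaseIndex m → ℝ) :
    ∑ i, X i • phaseDir i = (X (.inl (.inl ())), fun j => X (.inl (.inr j)),
      X (.inr (.inl ())), fun j => X (.inr (.inr j))) := by
  ext <;> simp [phaseDir, Fintype.sum_sum_type, Prod.fst_sum, Prod.snd_sum, Finset.sum_apply,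
    Pi.single_apply]

theorem IsHamSolOn.hasDerivAt {I : Set ℝ}
    (hγ : IsHamSolOn p (fun t => (γ t).1) (fun t => (γ t).2.1) (fun t => (γ t).2.2.1)
      (fun t => (γ t).2.2.2) I) {t : ℝ} (ht : t ∈ I) {L : Phase m →L[ℝ] ℝ}
    (hL : HasFDerivAt (fun x : Phase m => p x.1 x.2.1 x.2.2.1 x.2.2.2) L (γ t)) :
    HasDerivAt γ (∑ i, hamField L i • phaseDir i) t := by
  obtain ⟨hr, hθ, hρ, hω⟩ := hγ t ht
  simp only [pdR_eq hL, pdRho_eq hL, pdTheta_eq hL, pdOmega_eq hL] at hr hθ hρ hω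
  rw [sum_smul_phaseDir]
  exact hr.prodMk ((hasDerivAt_pi.2 hθ).prodMk (hρ.prodMk (hasDerivAt_pi.2 hω)))

theorem isBigO_of_hasDerivAt_bounded {r r' : ℝ → ℝ} (hr : ∀ t ≤ 0, HasDerivAt r (r' t) t)
    (hr' : r' =O[𝓟 (Iic 0)] fun _ => (1 : ℝ)) {T₀ : ℝ} (hT₀ : T₀ ≤ -1) :
    r =O[𝓟 (Iic 0)] fun t => -(t + T₀) := by
  obtain ⟨M, hM0, hM⟩ := hr'.exists_nonneg
  have hM' : ∀ t ∈ Iic (0 : ℝ), ‖r' t‖ ≤ M := by simpa using eventually_principal.1 hM.bound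
  refine IsBigO.of_bound (|r 0| + M) (eventually_principal.2 fun t (ht : t ≤ 0) => ?_)
  have hmvt : |r t - r 0| ≤ M * |t - 0| :=
    (convex_Iic 0).norm_image_sub_le_of_norm_hasDerivWithin_le
      (fun s hs => (hr s hs).hasDerivWithinAt) hM' self_mem_Iic ht
  have hτ : 1 ≤ -(t + T₀) := by linarith
  rw [sub_zero, abs_of_nonpos ht] at hmvt
  rw [Real.norm_of_nonneg (zero_le_one.trans hτ)]
  calc |r t| ≤ |r 0| + |r t - r 0| := by linarith [abs_sub_abs_le_abs_sub (r t) (r 0)]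
    _ ≤ |r 0| * 1 + M * -t := by linarith
    _ ≤ |r 0| * -(t + T₀) + M * -(t + T₀) := by gcongr; linarith
    _ = (|r 0| + M) * -(t + T₀) := by ring

theorem neg_add_isBigO {r : ℝ → ℝ} {c₀ T₀ : ℝ} (hc₀ : 0 < c₀)
    (hr : ∀ t ≤ 0, c₀ * |t + T₀| ≤ r t) : (fun t => -(t + T₀)) =O[𝓟 (Iic 0)] r := by
  refine IsBigO.of_bound c₀⁻¹ (eventually_principal.2 fun t ht => ?_)
  rw [norm_neg, Real.norm_eq_abs, inv_mul_eq_div, le_div_iff₀' hc₀]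
  exact (hr t ht).trans (le_abs_self _)

variable {μ : ℝ} {U K : Set (Fin m → ℝ)} {c : Coeffs m μ U} {c₀ C₀ T₀ : ℝ}

/-- A backward Hamiltonian trajectory which stays over `(1, ∞) × K` with momenta bounded by `C₀`
and escapes at least linearly. -/
structure IsEscaping (c : Coeffs m μ U) (K : Set (Fin m → ℝ)) (c₀ C₀ T₀ : ℝ) (γ : ℝ → Phase m) :
    Prop where
  hamilton : IsHamSolOn c.p (fun t => (γ t).1) (fun t => (γ t).2.1) (fun t => (γ t).2.2.1)
    (fun t => (γ t).2.2.2) (Iic 0)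
  mapsTo : MapsTo γ (Iic 0) (phaseFrame K C₀).domain
  le_radius : ∀ t ≤ 0, c₀ * |t + T₀| ≤ (γ t).1

theorem isSymbol_hamField {P' : Phase m → Phase m →L[ℝ] ℝ} {N : ℕ}
    (hP' : ∀ i, (phaseFrame K C₀).IsSymbol N (phaseWeight i.swap - 1) fun x => P' x (phaseDir i))
    (i : PhaseIndex m) :
    (phaseFrame K C₀).IsSymbol N (phaseWeight i - 1) (fun x => hamField (P' x) i) := by
  rcases i with i | i
  · exact hP' (.inr i)
  · exact (hP' (.inl i)).neg

theorem IsEscaping.isSymbol_comp (hμ : 0 ≤ μ) (hU : IsOpen U) (hK : IsCompact K) (hKU : K ⊆ U)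
    (hc₀ : 0 < c₀) (hγ : IsEscaping c K c₀ C₀ T₀ γ)
    {hτ : ∀ t ∈ Iic (0 : ℝ), 1 ≤ -(t + T₀)} {F : Type*} [NormedAddCommGroup F] [NormedSpace ℝ F]
    {N : ℕ} {ν : ℝ} {f : Phase m → F} (hf : (phaseFrame K C₀).IsSymbol N ν f) :
    (SymbolFrame.time (Iic 0) (fun t => -(t + T₀)) hτ).IsSymbol N ν (fun t => f (γ t)) := by
  obtain ⟨P', hP', hP'N⟩ := exists_hasFDerivAt_energy c hμ hU hK hKU C₀ N
  have hderiv : ∀ t ∈ Iic (0 : ℝ), HasDerivAt γ (∑ i, hamField (P' (γ t)) i • phaseDir i) t :=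
    fun t ht => hγ.hamilton.hasDerivAt ht (hP' _ (hγ.mapsTo ht))
  have hr : ∀ t ≤ 0, HasDerivAt (fun t => (γ t).1) (hamField (P' (γ t)) (.inl (.inl ()))) t :=
    fun t ht => (hγ.hamilton t ht).1.congr_deriv (pdRho_eq (hP' _ (hγ.mapsTo ht)))
  have hr' : (fun t => hamField (P' (γ t)) (.inl (.inl ()))) =O[𝓟 (Iic 0)] fun _ => (1 : ℝ) := by
    simpa [phaseWeight, Function.comp_def] using
      (isSymbol_hamField hP'N (.inl (.inl ()))).isBigO.comp_tendsto
        (tendsto_principal_principal.2 hγ.mapsTo)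
  have hscale : (fun t => (γ t).1) =Θ[𝓟 (Iic 0)] fun t => -(t + T₀) :=
    ⟨isBigO_of_hasDerivAt_bounded hr hr' (by linarith [hτ 0 self_mem_Iic]),
      neg_add_isBigO hc₀ hγ.le_radius⟩
  exact hf.comp_integralCurve hderiv hγ.mapsTo (isSymbol_hamField hP'N) hscale

end HamiltonFlow

section Cutoff

variable {m : ℕ} {χ : ℝ → ℝ}

theorem norm_le_eNorm (v : Fin m → ℝ) : ‖v‖ ≤ eNorm v :=
  (pi_norm_le_iff_of_nonneg (sqrt_nonneg _)).2 fun i => abs_le_sqrt <|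
    Finset.single_le_sum (f := fun j => v j ^ 2) (fun _ _ => sq_nonneg _) (Finset.mem_univ i)

theorem eNorm_smul {a : ℝ} (ha : 0 ≤ a) (v : Fin m → ℝ) : eNorm (a • v) = a * eNorm v := by
  simp only [eNorm, Pi.smul_apply, smul_eq_mul, mul_pow, ← Finset.mul_sum]
  rw [sqrt_mul (sq_nonneg a), sqrt_sq ha]

theorem contDiff_comp_sqrt (hχs : ContDiff ℝ (⊤ : ℕ∞) χ) (hχ1 : ∀ x ≤ 1, χ x = 1) :
    ContDiff ℝ (⊤ : ℕ∞) fun q => χ √q := by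
  refine contDiff_iff_contDiffAt.2 fun q => ?_
  rcases lt_or_ge q 1 with hq | hq
  · refine (contDiffAt_const (c := (1 : ℝ))).congr_of_eventuallyEq ?_
    filter_upwards [Iio_mem_nhds hq] with x hx using hχ1 _ (sqrt_le_one.2 (le_of_lt hx))
  · exact hχs.contDiffAt.comp q (contDiffAt_sqrt (one_pos.trans_le hq).ne')

theorem contDiff_comp_eNorm (hχs : ContDiff ℝ (⊤ : ℕ∞) χ) (hχ1 : ∀ x ≤ 1, χ x = 1) :
    ContDiff ℝ (⊤ : ℕ∞) fun v : Fin m → ℝ => χ (eNorm v) :=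
  (contDiff_comp_sqrt hχs hχ1).comp (ContDiff.sum fun i _ => (contDiff_apply ℝ ℝ i).pow 2)

theorem contDiff_comp_abs (hχs : ContDiff ℝ (⊤ : ℕ∞) χ) (hχ1 : ∀ x ≤ 1, χ x = 1) :
    ContDiff ℝ (⊤ : ℕ∞) fun x : ℝ => χ |x| := by
  simpa [Function.comp_def, sqrt_sq_eq_abs] using
    (contDiff_comp_sqrt hχs hχ1).comp (contDiff_id.pow 2)

theorem hasCompactSupport_comp {Y : Type*} [NormedAddCommGroup Y] [ProperSpace Y] {size : Y → ℝ}
    (hsize : ∀ v, ‖v‖ ≤ size v) {R : ℝ} (hχ0 : ∀ x ≥ R, χ x = 0) :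
    HasCompactSupport fun v => χ (size v) :=
  .intro (isCompact_closedBall (0 : Y) R) fun v hv => hχ0 _ <|
    (not_le.1 (mem_closedBall_zero_iff.not.1 hv)).le.trans (hsize v)

end Cutoff

section EscapeFunction

open SymbolFrame Asymptotics

variable {m : ℕ} {μ δ₀ C c₀ C₀ T₀ b ν : ℝ} {N : ℕ} {χ : ℝ → ℝ}
  {hτ : ∀ t ∈ Iic (0 : ℝ), 1 ≤ -(t + T₀)}

theorem isSymbol_abs_rpow (b : ℝ) :
    (time (Iic 0) (fun t => -(t + T₀)) hτ).IsSymbol N b (fun t => |t + T₀| ^ b) := by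
  have hderiv : ∀ t ∈ Iic (0 : ℝ), HasDerivAt (fun t => -(t + T₀)) (-1) t :=
    fun t _ => ((hasDerivAt_id t).add_const T₀).neg
  refine (IsSymbol.scale_rpow hderiv b).congr fun t ht => ?_
  have hneg : t + T₀ < 0 := by linarith [hτ t ht]
  filter_upwards [(continuous_add_const T₀).continuousAt.eventually_lt_const hneg] with s hs
  rw [abs_of_neg hs]

theorem isSymbol_width (hb : b ≤ 0) :
    (time (Iic 0) (fun t => -(t + T₀)) hτ).IsSymbol N 0 (fun t => δ₀ - C * |t + T₀| ^ b) :=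
  (IsSymbol.const δ₀).sub (((isSymbol_abs_rpow b).mono hb).const_smul C)

theorem eventually_half_le_width (hδ₀ : 0 < δ₀) (C : ℝ) (hb : b < 0) :
    ∀ᶠ T₀ in atBot, ∀ t < 1, δ₀ / 2 ≤ δ₀ - C * |t + T₀| ^ b := by
  have hlim : Tendsto (fun x : ℝ => C * x ^ b) atTop (𝓝 0) := by
    simpa using (tendsto_rpow_neg_atTop (neg_pos.2 hb)).const_mul C
  obtain ⟨R, hR⟩ := eventually_atTop.1 (hlim.eventually_le_const (half_pos hδ₀))
  filter_upwards [eventually_le_atBot (-R - 1)] with T₀ hT₀ t ht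
  linarith [hR |t + T₀| (by linarith [neg_le_abs (t + T₀)])]

theorem isSymbol_cutoff {Y : Type} [NormedAddCommGroup Y] [NormedSpace ℝ Y] {size : Y → ℝ}
    (hsize : ∀ a ≥ 0, ∀ v, size (a • v) = a * size v)
    (hΨ : ContDiff ℝ (⊤ : ℕ∞) fun v => χ (size v)) (hsupp : HasCompactSupport fun v => χ (size v))
    {τ : ℝ → ℝ} {hτ : ∀ t ∈ Iic (0 : ℝ), 1 ≤ τ t} {x : ℝ → Y} {D : ℝ → ℝ}
    (hx : (time (Iic 0) τ hτ).IsSymbol (N + 1) ν x) (hD : (time (Iic 0) τ hτ).IsSymbol (N + 1) ν D)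
    (hell : (fun t => τ t ^ ν) =O[𝓟 (Iic 0)] D) (hpos : ∀ t ≤ 0, ∀ᶠ s in 𝓝 t, 0 < D s)
    (L : Phase m →L[ℝ] Y) (hL : ∀ i, L (phaseDir i) = 0 ∨ phaseWeight i ≤ ν) :
    (spacetimeFrame m τ hτ).IsSymbol N 0 (fun z => χ (size (L z.2 - x z.1) / D z.1)) := by
  refine (hx.rescaledBump hD hell hL hΨ hsupp).congr fun z hz => ?_
  filter_upwards [continuousAt_fst.eventually (hpos z.1 hz)] with y hy
  rw [hsize _ (inv_nonneg.2 hy.le), div_eq_inv_mul]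

theorem isSymbol_cutoff_of_half_le {Y : Type} [NormedAddCommGroup Y] [NormedSpace ℝ Y]
    {size : Y → ℝ} (hsize : ∀ a ≥ 0, ∀ v, size (a • v) = a * size v)
    (hΨ : ContDiff ℝ (⊤ : ℕ∞) fun v => χ (size v)) (hsupp : HasCompactSupport fun v => χ (size v))
    (hδ₀ : 0 < δ₀) (hb : b ≤ 0) (hD : ∀ t < 1, δ₀ / 2 ≤ δ₀ - C * |t + T₀| ^ b) {x : ℝ → Y}
    (hx : (time (Iic 0) (fun t => -(t + T₀)) hτ).IsSymbol (N + 1) 0 x)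
    (L : Phase m →L[ℝ] Y) (hL : L (phaseDir (.inl (.inl ()))) = 0) :
    (spacetimeFrame m (fun t => -(t + T₀)) hτ).IsSymbol N 0
      (fun z => χ (size (L z.2 - x z.1) / (δ₀ - C * |z.1 + T₀| ^ b))) := by
  have hpos : ∀ t < 1, 0 < δ₀ - C * |t + T₀| ^ b := fun t ht => (half_pos hδ₀).trans_le (hD t ht)
  refine isSymbol_cutoff hsize hΨ hsupp hx (isSymbol_width hb) ?_ (fun t ht => ?_) L ?_
  · refine IsBigO.of_bound (δ₀ / 2)⁻¹ (eventually_principal.2 fun t (ht : t ≤ 0) => ?_)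
    have ht1 : t < 1 := by linarith
    rw [rpow_zero, norm_one, Real.norm_of_nonneg (hpos t ht1).le, inv_mul_eq_div,
      one_le_div (half_pos hδ₀)]
    exact hD t ht1
  · filter_upwards [Iio_mem_nhds (ht.trans_lt one_pos)] with s hs using hpos s hs
  · rintro ((_ | _) | (_ | _))
    · exact .inl hL
    all_goals simp [phaseWeight]

theorem isSymbol_radial_cutoff (hχs : ContDiff ℝ (⊤ : ℕ∞) χ) (hχ1 : ∀ x ≤ 1, χ x = 1)
    (hχ0 : ∀ x ≥ 2, χ x = 0) {δ : ℝ} (hδ : 0 < δ) {r : ℝ → ℝ}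
    (hr : (time (Iic 0) (fun t => -(t + T₀)) hτ).IsSymbol (N + 1) 1 r) :
    (spacetimeFrame m (fun t => -(t + T₀)) hτ).IsSymbol N 0
      (fun z => χ (|z.2.1 - r z.1| / (δ * |z.1 + T₀|))) := by
  have hne {t : ℝ} (ht : t ≤ 0) : t + T₀ ≠ 0 := by linarith [hτ t ht]
  have hD : (time (Iic 0) (fun t => -(t + T₀)) hτ).IsSymbol (N + 1) 1 fun t => δ * |t + T₀| := by
    simpa only [rpow_one, smul_eq_mul] using (isSymbol_abs_rpow 1).const_smul δ
  refine isSymbol_cutoff (fun a ha v => by simp [abs_mul, abs_of_nonneg ha])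
    (contDiff_comp_abs hχs hχ1) (hasCompactSupport_comp (fun _ => le_rfl) hχ0) hr hD ?_
    (fun t ht => ?_) (ContinuousLinearMap.fst ℝ _ _) ?_
  · refine IsBigO.of_bound δ⁻¹ (.of_forall fun t => ?_)
    rw [rpow_one, norm_neg, norm_mul, Real.norm_of_nonneg hδ.le, inv_mul_cancel_left₀ hδ.ne',
      Real.norm_eq_abs, Real.norm_eq_abs, abs_abs]
  · filter_upwards [(continuous_add_const T₀).continuousAt.eventually_ne (hne ht)] with s hs
    positivity
  · rintro ((_ | _) | (_ | _)) <;> simp [phaseWeight]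

variable {U K : Set (Fin m → ℝ)} {c : Coeffs m μ U} {γ : ℝ → Phase m}

theorem IsEscaping.isSymbol_escapeFn (hμ : 0 < μ) (hU : IsOpen U) (hK : IsCompact K)
    (hKU : K ⊆ U) (hc₀ : 0 < c₀) (hγ : IsEscaping c K c₀ C₀ T₀ γ)
    (hχs : ContDiff ℝ (⊤ : ℕ∞) χ) (hχ1 : ∀ x ≤ 1, χ x = 1) (hχ0 : ∀ x ≥ 2, χ x = 0)
    (hδ₀ : 0 < δ₀) (hangular : ∀ t < 1, δ₀ / 2 ≤ δ₀ - C * |t + T₀| ^ (-μ))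
    (hrho : ∀ t < 1, δ₀ / 2 ≤ δ₀ - C * |t + T₀| ^ (-1 - μ)) :
    (spacetimeFrame m (fun t => -(t + T₀)) hτ).IsSymbol N 0
      (onSpacetime (escapeFn μ χ δ₀ C T₀ (fun t => (γ t).1) (fun t => (γ t).2.1)
        (fun t => (γ t).2.2.1) (fun t => (γ t).2.2.2))) := by
  have hsymb {F : Type} [NormedAddCommGroup F] [NormedSpace ℝ F] {ν : ℝ} {f : Phase m → F}
      (hf : (phaseFrame K C₀).IsSymbol (N + 1) ν f) :
      (time (Iic 0) (fun t => -(t + T₀)) hτ).IsSymbol (N + 1) ν (fun t => f (γ t)) :=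
    hγ.isSymbol_comp hμ.le hU hK hKU hc₀ hf
  have hscalar := hasCompactSupport_comp (fun x : ℝ => (le_rfl : ‖x‖ ≤ |x|)) hχ0
  have hvector := hasCompactSupport_comp (norm_le_eNorm (m := m)) hχ0
  have hRadial := isSymbol_radial_cutoff (m := m) hχs hχ1 hχ0
    (mul_pos (by norm_num : (0 : ℝ) < 5) hδ₀) (hsymb isSymbol_radius)
  have hTheta := isSymbol_cutoff_of_half_le (m := m) (fun _ => eNorm_smul)
    (contDiff_comp_eNorm hχs hχ1) hvector hδ₀ (by linarith) hangular (hsymb (isSymbol_theta hK))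
    (.fst ℝ _ _ ∘L .snd ℝ _ _) (by simp [phaseDir])
  have hRho := isSymbol_cutoff_of_half_le (m := m)
    (fun a ha v => by simp [abs_mul, abs_of_nonneg ha]) (contDiff_comp_abs hχs hχ1) hscalar
    hδ₀ (by linarith) hrho (hsymb isSymbol_rho)
    (.fst ℝ _ _ ∘L .snd ℝ _ _ ∘L .snd ℝ _ _) (by simp [phaseDir])
  have hOmega := isSymbol_cutoff_of_half_le (m := m) (fun _ => eNorm_smul)
    (contDiff_comp_eNorm hχs hχ1) hvector hδ₀ (by linarith) hangular (hsymb isSymbol_omega)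
    (.snd ℝ _ _ ∘L .snd ℝ _ _ ∘L .snd ℝ _ _) (by simp [phaseDir])
  exact (((hRadial.mul hTheta).mul hRho).mul hOmega).mono (by simp)

theorem exists_mixedDeriv_bound {φ : F5 m}
    (hφ : ∀ N, (spacetimeFrame m (fun t => -(t + T₀)) hτ).IsSymbol N 0 (onSpacetime φ))
    (k l n : ℕ) (α β : List (Fin m)) :
    ∃ Cb > 0, ∀ t ≤ 0, ∀ r θ ρ ω,
      |mixedDeriv k α l β n φ t r θ ρ ω| ≤ Cb * (1 + |t|) ^ (-(n : ℝ) - k) := by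
  have hmixed := isSymbolOrZero_mixedDeriv (fun N => ⟨_, hφ N, fun _ _ => .inl rfl⟩) k l n α β
  obtain ⟨Cb, hCb, hbound⟩ := hmixed.isBigO.exists_pos
  refine ⟨Cb, hCb, fun t ht r θ ρ ω => ?_⟩
  have hτt : 1 + |t| ≤ -(t + T₀) := by linarith [abs_of_nonpos ht, hτ 0 self_mem_Iic]
  have hle : |mixedDeriv k α l β n φ t r θ ρ ω| ≤ Cb * ‖(-(t + T₀)) ^ (0 - (n : ℝ) - k)‖ :=
    eventually_principal.1 hbound.bound (t, r, θ, ρ, ω) ht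
  rw [Real.norm_of_nonneg (rpow_nonneg (zero_le_one.trans (hτ t ht)) _), zero_sub] at hle
  refine hle.trans (mul_le_mul_of_nonneg_left ?_ hCb.le)
  exact rpow_le_rpow_of_nonpos (by positivity) hτt
    (by linarith [n.cast_nonneg (α := ℝ), k.cast_nonneg (α := ℝ)])

end EscapeFunction

theorem statement_16_general {m : ℕ} {μ : ℝ} (hμ : 0 < μ) {U : Set (Fin m → ℝ)} (hU : IsOpen U)
    (c : Coeffs m μ U) (χ : ℝ → ℝ) (hχs : ContDiff ℝ (⊤ : ℕ∞) χ) (hχ1 : ∀ x ≤ 1, χ x = 1)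
    (hχ0 : ∀ x ≥ 2, χ x = 0) (K : Set (Fin m → ℝ)) (hK : IsCompact K) (hKU : K ⊆ U)
    (c₀ C₀ : ℝ) (hc₀ : 0 < c₀) (δ₀ : ℝ) (hδ₀ : 0 < δ₀) (C : ℝ) :
    ∃ T₁ < 0, ∀ T₀ ≤ T₁,
      ∀ (rS : ℝ → ℝ) (θS : ℝ → Fin m → ℝ) (ρS : ℝ → ℝ) (ωS : ℝ → Fin m → ℝ),
        IsHamSolOn c.p rS θS ρS ωS (Iic 0) →
        (∀ t ≤ (0 : ℝ), rS t ∈ Ioi (1 : ℝ) ∧ θS t ∈ K ∧ |ρS t| ≤ C₀ ∧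
          eNorm (ωS t) ≤ C₀ ∧ rS t ≥ c₀ * |t + T₀|) →
        ∀ (k l n : ℕ) (α β : List (Fin m)), ∃ Cb > (0 : ℝ),
          ∀ t ≤ (0 : ℝ), ∀ (r : ℝ) (θ : Fin m → ℝ) (ρ : ℝ) (ω : Fin m → ℝ),
            |mixedDeriv k α l β n (escapeFn μ χ δ₀ C T₀ rS θS ρS ωS) t r θ ρ ω|
              ≤ Cb * (1 + |t|) ^ (-(n : ℝ) - (k : ℝ)) := by
  obtain ⟨T₁, hT₁⟩ := eventually_atBot.1 <| (eventually_le_atBot (-1)).and <|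
    (eventually_half_le_width hδ₀ C (b := -μ) (by linarith)).and <|
    eventually_half_le_width hδ₀ C (b := -1 - μ) (by linarith)
  refine ⟨T₁, by linarith [(hT₁ T₁ le_rfl).1], fun T₀ hT₀ rS θS ρS ωS hsol htraj => ?_⟩
  obtain ⟨hT₀, hangular, hrho⟩ := hT₁ T₀ hT₀
  have hτ : ∀ t ∈ Iic (0 : ℝ), 1 ≤ -(t + T₀) := fun t (ht : t ≤ 0) => by linarith
  have hγ : IsEscaping c K c₀ C₀ T₀ fun t => (rS t, θS t, ρS t, ωS t) :=
    { hamilton := hsol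
      mapsTo := fun t ht =>
        let ⟨hr, hθ, hρ, hω, _⟩ := htraj t ht
        ⟨hr, hθ, hρ, (norm_le_eNorm _).trans hω⟩
      le_radius := fun t ht => (htraj t ht).2.2.2.2 }
  exact exists_mixedDeriv_bound (hτ := hτ)
    fun _ => hγ.isSymbol_escapeFn hμ hU hK hKU hc₀ hχs hχ1 hχ0 hδ₀ hangular hrho

/-- Lemma 3.5, part 3: symbol estimates for the escape function:
`|∂_r^k ∂_θ^α ∂_ρ^l ∂_ω^β ∂_t^n φ| ≤ C_{kαlβn} ⟨t⟩^{-n-k}`. -/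
theorem statement_16 {m : ℕ} (hm : 1 ≤ m) {μ : ℝ} (hμ : μ ∈ Ioo (0:ℝ) 1)
    {U : Set (Fin m → ℝ)} (hU : IsOpen U) (c : Coeffs m μ U)
    (χ : ℝ → ℝ) (hχs : ContDiff ℝ (⊤ : ℕ∞) χ)
    (hχ1 : ∀ τ ≤ (1:ℝ), χ τ = 1) (hχ0 : ∀ τ ≥ (2:ℝ), χ τ = 0)
    (hχrange : ∀ τ, χ τ ∈ Icc (0:ℝ) 1) (hχmono : ∀ τ ≥ (0:ℝ), deriv χ τ ≤ 0)
    (K : Set (Fin m → ℝ)) (hK : IsCompact K) (hKU : K ⊆ U)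
    (c₀ C₀ : ℝ) (hc₀ : 0 < c₀) (hC₀ : 0 < C₀) :
    ∃ δ' > (0:ℝ), ∀ δ₀ ∈ Ioo (δ'/2) δ', ∃ C₁ > (0:ℝ), ∀ C ≥ C₁, ∃ T₁ < (0:ℝ),
      ∀ T₀ ≤ T₁,
      ∀ (rS : ℝ → ℝ) (θS : ℝ → Fin m → ℝ) (ρS : ℝ → ℝ) (ωS : ℝ → Fin m → ℝ),
        IsHamSolOn c.p rS θS ρS ωS (Iic 0) →
        (∀ t ≤ (0:ℝ), rS t ∈ Ioi (1:ℝ) ∧ θS t ∈ K ∧ |ρS t| ≤ C₀ ∧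
          eNorm (ωS t) ≤ C₀ ∧ rS t ≥ c₀ * |t + T₀|) →
        ∀ (k l n' : ℕ) (α β : List (Fin m)), ∃ Cb > (0:ℝ),
          ∀ t ≤ (0:ℝ), ∀ r ∈ Ioi (1:ℝ), ∀ θ ∈ U, ∀ (ρ : ℝ) (ω : Fin m → ℝ),
            |mixedDeriv k α l β n' (escapeFn μ χ δ₀ C T₀ rS θS ρS ωS) t r θ ρ ω|
              ≤ Cb * (1 + |t|) ^ (-(n' : ℝ) - (k : ℝ)) := by
  refine ⟨1, one_pos, fun δ₀ hδ₀ => ⟨1, one_pos, fun C _ => ?_⟩⟩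
  obtain ⟨T₁, hT₁, hbound⟩ := statement_16_general hμ.1 hU c χ hχs hχ1 hχ0 K hK hKU c₀ C₀ hc₀ δ₀
    (half_pos one_pos |>.trans hδ₀.1) C
  exact ⟨T₁, hT₁, fun T₀ hT₀ rS θS ρS ωS hsol htraj k l n' α β =>
    (hbound T₀ hT₀ rS θS ρS ωS hsol htraj k l n' α β).imp fun _ hCb =>
      ⟨hCb.1, fun t ht r _ θ _ => hCb.2 t ht r θ⟩⟩

end Scattering
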